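/- The Riemann hypothesis holds if and only if for every positive integer n one has (∑_{k ≤ δ(n)} 1/k − n²/2)² < 36·n³. -/

import Mathlib

open scoped Real

/-- The Riemann hypothesis: every nontrivial zero of ζ (a zero with real part strictly
between 0 and 1) has real part 1/2. -/
def RH : Prop := ∀ s : ℂ, riemannZeta s = 0 → 0 < s.re → s.re < 1 → s.re = 1 / 2

/-- η(j) = p if j = p^k is a power of a prime p (k ≥ 1), and η(j) = 1 otherwise. -/
noncomputable def eta (j : ℕ) : ℕ := if IsPrimePow j then j.minFac else 1

/-- δ(n) = ∏_{m < n} ∏_{j ≤ m} η(j). -/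
noncomputable def delta (n : ℕ) : ℕ :=
  ∏ m ∈ Finset.range n, ∏ j ∈ Finset.Icc 1 m, eta j

/-!
Grouping the prime powers `j ≤ m` gives `log δ(n) = ψ₁(n)` with `ψ₁(x) = ∫₀ˣ ψ`, so the harmonic sum
is `ψ₁(n) + O(1)`. Put `ζ₁(s) = (s - 1) ζ(s)`. The error `ψ₁(x) - (x - 1)₊² / 2`, which differs from
`ψ₁(x) - x² / 2` by `O(x)`, has Mellin transform `-ζ₁'/ζ₁(s) / (s (s + 1))` at `-s - 1`.

If the error is `O(x ^ (3 / 2))`, the Mellin transform is holomorphic for `Re s > 1 / 2`, hence so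
is `ζ₁'/ζ₁`, and `ζ₁` has no zero there; the functional equation does the rest.

Conversely, under RH the quotient `ξ(s - h) / ξ(s + h)` is bounded by `1` on vertical lines to the
right of `1 / 2` (Phragmén–Lindelöf), so `Re ξ'/ξ ≥ 0` there, that is,
`Re (ζ₁'/ζ₁) (s) ≥ -log |s / 2 + 1| / 2`. Such a one-sided bound suffices for an explicit constant:
adding the complex conjugate of `ζ₁'/ζ₁` to the integrand of the explicit formula on `Re s = σ`
changes the integral by a known amount and replaces `ζ₁'/ζ₁` by twice its real part, and the
integral of a majorant `Re N` against `|s (s + 1)|⁻¹ ≤ |s|⁻²` is a Poisson integral, which evaluates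
to `Re N(2σ)` up to a factor. Finally `σ → 1 / 2`.
-/

namespace HarmonicCriterion

open Asymptotics Filter MeasureTheory Set Topology
open ArithmeticFunction (vonMangoldt)

section ChebyshevPsi₁

/-- The integrated Chebyshev function `ψ₁(x) = ∫₀ˣ ψ = ∑ k ≤ x, Λ(k) (x - k)`. The cut-off `k ≤ x`
is expressed by a positive part, so that the series has finitely many nonzero terms. -/
noncomputable def psi₁ (x : ℝ) : ℝ := ∑' k : ℕ, vonMangoldt k * max (x - k) 0

lemma psi₁_eq_sum_range {x : ℝ} {N : ℕ} (h : x ≤ N) :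
    psi₁ x = ∑ k ∈ Finset.range N, vonMangoldt k * max (x - k) 0 := by
  refine tsum_eq_sum fun k hk => ?_
  have hNk : (N : ℝ) ≤ k := by exact_mod_cast not_lt.mp (mt Finset.mem_range.mpr hk)
  rw [max_eq_right (by linarith), mul_zero]

lemma psi₁_nonneg (x : ℝ) : 0 ≤ psi₁ x :=
  tsum_nonneg fun _ => mul_nonneg ArithmeticFunction.vonMangoldt_nonneg (le_max_right _ _)

lemma psi₁_mono : Monotone psi₁ := by
  intro x y hxy
  obtain ⟨N, hN⟩ := exists_nat_ge y
  rw [psi₁_eq_sum_range hN, psi₁_eq_sum_range (hxy.trans hN)]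
  gcongr

lemma continuous_psi₁ : Continuous psi₁ := by
  refine continuous_iff_continuousAt.mpr fun x => ?_
  obtain ⟨N, hN⟩ := exists_nat_gt x
  have heq : psi₁ =ᶠ[𝓝 x] fun y => ∑ k ∈ Finset.range N, vonMangoldt k * max (y - k) 0 := by
    filter_upwards [Iio_mem_nhds hN] with y hy using psi₁_eq_sum_range hy.le
  exact ContinuousAt.congr (by fun_prop) heq.symm

lemma psi₁_of_le_one {x : ℝ} (h : x ≤ 1) : psi₁ x = 0 := by
  rw [psi₁_eq_sum_range (N := 1) (by simpa using h)]
  simp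

lemma psi₁_le {x : ℝ} (hx : 0 ≤ x) : psi₁ x ≤ (Real.log 4 + 4) * x ^ 2 := by
  have h : psi₁ x ≤ Chebyshev.psi x * x := by
    rw [psi₁_eq_sum_range (N := ⌊x⌋₊ + 1) (by exact_mod_cast (Nat.lt_floor_add_one x).le),
      Chebyshev.psi_eq_sum_Icc, Finset.sum_mul, ← Nat.range_succ_eq_Icc_zero]
    gcongr with k
    exact max_le (by linarith [k.cast_nonneg (α := ℝ)]) hx
  nlinarith [Chebyshev.psi_le_const_mul_self hx]

lemma psi₁_natCast_succ (n : ℕ) : psi₁ (n + 1 : ℕ) = psi₁ n + Chebyshev.psi n := by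
  rw [psi₁_eq_sum_range le_rfl, psi₁_eq_sum_range (N := n + 1) (by simp), Chebyshev.psi_eq_sum_Icc,
    Nat.floor_natCast, ← Nat.range_succ_eq_Icc_zero, ← Finset.sum_add_distrib]
  refine Finset.sum_congr rfl fun k hk => ?_
  have hkn : (k : ℝ) ≤ n := by exact_mod_cast Nat.lt_succ_iff.mp (Finset.mem_range.mp hk)
  rw [max_eq_left (by push_cast; linarith), max_eq_left (by linarith)]
  push_cast
  ring

end ChebyshevPsi₁

section Delta

lemma eta_pos (j : ℕ) : 0 < eta j := by
  unfold eta
  split_ifs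
  exacts [j.minFac_pos, one_pos]

lemma log_eta (j : ℕ) : Real.log (eta j) = vonMangoldt j := by
  rw [eta, ArithmeticFunction.vonMangoldt_apply]
  split_ifs <;> simp

lemma log_prod_eta (n : ℕ) : Real.log (∏ j ∈ Finset.Icc 1 n, eta j : ℕ) = Chebyshev.psi n := by
  rw [Nat.cast_prod, Real.log_prod fun j _ => Nat.cast_ne_zero.mpr (eta_pos j).ne', Chebyshev.psi,
    Nat.floor_natCast]
  simp only [log_eta]
  rfl

lemma delta_succ (n : ℕ) : delta (n + 1) = delta n * ∏ j ∈ Finset.Icc 1 n, eta j :=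
  Finset.prod_range_succ _ n

lemma delta_pos (n : ℕ) : 0 < delta n :=
  Finset.prod_pos fun _ _ => Finset.prod_pos fun _ _ => eta_pos _

lemma log_delta (n : ℕ) : Real.log (delta n) = psi₁ n := by
  induction n with
  | zero => simp [delta, psi₁_of_le_one]
  | succ n ih =>
    have hprod : ∏ j ∈ Finset.Icc 1 n, eta j ≠ 0 := Finset.prod_ne_zero_iff.mpr fun j _ =>
      (eta_pos j).ne'
    rw [delta_succ, psi₁_natCast_succ, Nat.cast_mul, Real.log_mul
      (Nat.cast_ne_zero.mpr (delta_pos n).ne') (Nat.cast_ne_zero.mpr hprod), ih, log_prod_eta]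

lemma abs_harmonic_sub_log_le_one {n : ℕ} (hn : n ≠ 0) : |(harmonic n : ℝ) - Real.log n| ≤ 1 := by
  have hlog : Real.log n ≤ Real.log (n + 1 : ℕ) := by gcongr; omega
  rw [abs_le]
  constructor <;> linarith [harmonic_le_one_add_log n, log_add_one_le_harmonic n]

lemma abs_sum_inv_delta_sub_psi₁_le_one (n : ℕ) :
    |(∑ k ∈ Finset.Icc 1 (delta n), (1 : ℝ) / k) - psi₁ n| ≤ 1 := by
  have h := abs_harmonic_sub_log_le_one (delta_pos n).ne'
  rw [log_delta, harmonic_eq_sum_Icc] at h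
  simpa using h

end Delta

section Error

/-- The error term `ψ₁(x) - (x - 1)₊² / 2`. The main term is normalised to vanish on `(-∞, 1]`, as
`ψ₁` does, so that the Mellin transform of the error term has no pole at `1`. -/
noncomputable def psi₁Error (x : ℝ) : ℝ := psi₁ x - (max (x - 1) 0) ^ 2 / 2

lemma continuous_psi₁Error : Continuous psi₁Error := by
  have := continuous_psi₁
  unfold psi₁Error
  fun_prop

lemma psi₁Error_of_le_one {x : ℝ} (h : x ≤ 1) : psi₁Error x = 0 := by
  rw [psi₁Error, psi₁_of_le_one h, max_eq_right (by linarith)]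
  simp

lemma psi₁Error_isBigO_sq : (fun x => (psi₁Error x : ℂ)) =O[atTop] fun x : ℝ => x ^ (2 : ℝ) := by
  refine IsBigO.of_bound (Real.log 4 + 4 + 1) ?_
  filter_upwards [eventually_ge_atTop 1] with x hx
  have hlog : 0 ≤ Real.log 4 := Real.log_nonneg (by norm_num)
  rw [Real.rpow_two, Complex.norm_real, Real.norm_eq_abs, Real.norm_of_nonneg (sq_nonneg x),
    psi₁Error, max_eq_left (by linarith), abs_le]
  constructor <;> nlinarith [psi₁_nonneg x, psi₁_le (zero_le_one.trans hx),
    mul_nonneg hlog (sq_nonneg x)]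

lemma psi₁Error_isBigO_zero (b : ℝ) :
    (fun x => (psi₁Error x : ℂ)) =O[𝓝[>] 0] fun x : ℝ => x ^ (-b) := by
  have h : (fun x => (psi₁Error x : ℂ)) =ᶠ[𝓝[>] 0] 0 := by
    filter_upwards [nhdsWithin_le_nhds (Iic_mem_nhds (zero_lt_one' ℝ))] with x hx
    simp [psi₁Error_of_le_one hx]
  exact h.trans_isBigO (isBigO_zero _ _)

end Error

section Mellin

lemma hasMellin_indicator_Ioi_cpow {a : ℝ} (ha : 0 < a) {p z : ℂ} (h : (z + p).re < 0) :
    HasMellin ((Ioi a).indicator fun x : ℝ => (x : ℂ) ^ p) z (-(a : ℂ) ^ (z + p) / (z + p)) := by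
  have hre : (z - 1 + p).re < -1 := by
    simp only [Complex.add_re, Complex.sub_re, Complex.one_re] at h ⊢
    linarith
  have hint := integrableOn_Ioi_cpow_of_lt hre ha
  have hpow : ∀ x ∈ Ioi (0 : ℝ),
      (x : ℂ) ^ (z - 1) • (Ioi a).indicator (fun x : ℝ => (x : ℂ) ^ p) x =
        (Ioi a).indicator (fun x : ℝ => (x : ℂ) ^ (z - 1 + p)) x := by
    intro x hx
    by_cases hxa : x ∈ Ioi a
    · have hx0 : (x : ℂ) ≠ 0 := Complex.ofReal_ne_zero.mpr (mem_Ioi.mp hx).ne'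
      simp [hxa, Complex.cpow_add _ _ hx0]
    · simp [hxa]
  refine ⟨?_, ?_⟩
  · rw [MellinConvergent, integrableOn_congr_fun hpow measurableSet_Ioi]
    exact ((integrable_indicator_iff measurableSet_Ioi).mpr hint).integrableOn
  · rw [mellin, setIntegral_congr_fun measurableSet_Ioi hpow,
      setIntegral_indicator measurableSet_Ioi, Ioi_inter_Ioi, sup_eq_right.mpr ha.le,
      integral_Ioi_cpow_of_lt hre ha, show z - 1 + p + 1 = z + p by ring]

lemma hasMellin_max_sub {a : ℝ} (ha : 0 < a) {s : ℂ} (hs : 0 < s.re) :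
    HasMellin (fun x : ℝ => ((max (x - a) 0 : ℝ) : ℂ)) (-s - 1)
      ((a : ℂ) ^ (-s) / (s * (s + 1))) := by
  have hs0 : s ≠ 0 := Complex.ne_zero_of_re_pos hs
  have hs1 : s + 1 ≠ 0 := Complex.ne_zero_of_re_pos (by simp; linarith)
  have hs1' : -s - 1 ≠ 0 := by rw [← neg_add']; exact neg_ne_zero.mpr hs1
  have h₁ := hasMellin_indicator_Ioi_cpow ha (p := 1) (z := -s - 1) (by simp; linarith)
  have h₀ := hasMellin_indicator_Ioi_cpow ha (p := 0) (z := -s - 1) (by simp; linarith)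
  have h₀' := hasMellin_const_smul h₀.1 (a : ℂ)
  have h := hasMellin_sub h₁.1 h₀'.1
  rw [h₁.2, h₀'.2, h₀.2] at h
  convert h using 1
  · ext x
    by_cases hx : a < x
    · simp [hx, hx.le]
    · simp [hx, not_lt.mp hx]
  · have ha0 : (a : ℂ) ≠ 0 := Complex.ofReal_ne_zero.mpr ha.ne'
    rw [sub_add_cancel, add_zero, Complex.cpow_sub _ _ ha0, Complex.cpow_one, smul_eq_mul]
    field_simp
    ring

lemma hasMellin_sq_max_sub_one {s : ℂ} (hs : 1 < s.re) :
    HasMellin (fun x : ℝ => (((max (x - 1) 0) ^ 2 / 2 : ℝ) : ℂ)) (-s - 1)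
      (1 / ((s - 1) * (s * (s + 1)))) := by
  have hs0 : s ≠ 0 := Complex.ne_zero_of_re_pos (by linarith)
  have hs1 : s + 1 ≠ 0 := Complex.ne_zero_of_re_pos (by simp; linarith)
  have hs2 : s - 1 ≠ 0 := Complex.ne_zero_of_re_pos (by simp; linarith)
  have hs1' : -s - 1 ≠ 0 := by rw [← neg_add']; exact neg_ne_zero.mpr hs1
  have hs2' : -s + 1 ≠ 0 := by rw [neg_add_eq_sub, ← neg_sub]; exact neg_ne_zero.mpr hs2
  have h₂ := hasMellin_indicator_Ioi_cpow one_pos (p := 2) (z := -s - 1) (by simp; linarith)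
  have h₁ := hasMellin_indicator_Ioi_cpow one_pos (p := 1) (z := -s - 1) (by simp; linarith)
  have h₀ := hasMellin_indicator_Ioi_cpow one_pos (p := 0) (z := -s - 1) (by simp; linarith)
  have h₂' := hasMellin_const_smul h₂.1 (1 / 2 : ℂ)
  have h₀' := hasMellin_const_smul h₀.1 (1 / 2 : ℂ)
  have h₂₁ := hasMellin_sub h₂'.1 h₁.1
  have h := hasMellin_add h₂₁.1 h₀'.1
  rw [h₂₁.2, h₂'.2, h₂.2, h₁.2, h₀'.2, h₀.2] at h
  convert h using 1
  · ext x
    by_cases hx : 1 < x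
    · simp [hx, hx.le]
      ring
    · simp [hx, not_lt.mp hx]
  · simp only [Complex.ofReal_one, Complex.one_cpow, smul_eq_mul, sub_add_cancel, add_zero,
      show -s - 1 + 2 = -s + 1 by ring]
    field_simp
    ring

lemma integral_norm_cpow_smul_max_sub {a : ℝ} (ha : 0 < a) {s : ℂ} (hs : 0 < s.re) :
    ∫ x : ℝ in Ioi 0, ‖(x : ℂ) ^ (-s - 1 - 1) • ((max (x - a) 0 : ℝ) : ℂ)‖ =
      a ^ (-s.re) / (s.re * (s.re + 1)) := by
  have h := (hasMellin_max_sub ha (s := s.re) (by simpa using hs)).2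
  have hreal : mellin (fun x : ℝ => ((max (x - a) 0 : ℝ) : ℂ)) (-s.re - 1) =
      ((∫ x : ℝ in Ioi 0, ‖(x : ℂ) ^ (-s - 1 - 1) • ((max (x - a) 0 : ℝ) : ℂ)‖ : ℝ) : ℂ) := by
    rw [mellin, ← integral_complex_ofReal]
    refine setIntegral_congr_fun measurableSet_Ioi fun x hx => ?_
    rw [norm_smul, Complex.norm_cpow_eq_rpow_re_of_pos hx, Complex.norm_real,
      Real.norm_of_nonneg (le_max_right _ _)]
    simp [Complex.ofReal_cpow (mem_Ioi.mp hx).le]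
  have := hreal.symm.trans h
  rw [← Complex.ofReal_neg, ← Complex.ofReal_cpow ha.le] at this
  exact_mod_cast this

lemma mellin_tsum_mul_max_sub {f : ℕ → ℂ} (hf : f 0 = 0) {s : ℂ} (hs : 0 < s.re)
    (hsum : LSeriesSummable f s) :
    mellin (fun x : ℝ => ∑' k : ℕ, f k * ((max (x - k) 0 : ℝ) : ℂ)) (-s - 1) =
      LSeries f s / (s * (s + 1)) := by
  set F : ℕ → ℝ → ℂ := fun k x => (x : ℂ) ^ (-s - 1 - 1) • (f k * ((max (x - k) 0 : ℝ) : ℂ))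
  have hterm (k : ℕ) {z : ℂ} (hz : 0 < z.re) :
      HasMellin (fun x : ℝ => f k • ((max (x - k) 0 : ℝ) : ℂ)) (-z - 1)
        (LSeries.term f z k / (z * (z + 1))) := by
    rcases k.eq_zero_or_pos with rfl | hk
    · simp [hf, HasMellin, MellinConvergent, mellin, IntegrableOn]
    · have h := hasMellin_max_sub (a := k) (Nat.cast_pos.mpr hk) hz
      have h' := hasMellin_const_smul h.1 (f k)
      rw [h.2, smul_eq_mul] at h'
      convert h' using 1
      rw [LSeries.term_of_ne_zero hk.ne', Complex.ofReal_natCast, Complex.cpow_neg]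
      ring
  have hnorm (k : ℕ) : ∫ x in Ioi 0, ‖F k x‖ = ‖LSeries.term f s k‖ / (s.re * (s.re + 1)) := by
    rcases k.eq_zero_or_pos with rfl | hk
    · simp [F, hf]
    · have hF (x : ℝ) : ‖F k x‖ =
          ‖f k‖ * ‖(x : ℂ) ^ (-s - 1 - 1) • ((max (x - k) 0 : ℝ) : ℂ)‖ := by
        simp only [F, norm_smul, norm_mul]
        ring
      simp_rw [hF]
      rw [integral_const_mul, integral_norm_cpow_smul_max_sub (Nat.cast_pos.mpr hk) hs,
        LSeries.term_of_ne_zero hk.ne', norm_div, Complex.norm_natCast_cpow_of_pos hk,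
        Real.rpow_neg k.cast_nonneg]
      ring
  have hsummable : Summable fun k => ∫ x in Ioi 0, ‖F k x‖ := by
    simp_rw [hnorm]
    exact hsum.norm.div_const _
  have hint := hasSum_integral_of_summable_integral_norm (fun k => (hterm k hs).1) hsummable
  simp only [mellin, smul_eq_mul, ← tsum_mul_left]
  refine hint.tsum_eq.symm.trans ?_
  rw [LSeries, ← tsum_div_const]
  exact tsum_congr fun k => (hterm k hs).2

lemma neg_deriv_riemannZeta_div {s : ℂ} (hs : s ≠ 1) (h0 : riemannZeta s ≠ 0) :
    -deriv riemannZeta s / riemannZeta s = 1 / (s - 1) - logDeriv riemannZeta₁ s := by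
  have hs1 : s - 1 ≠ 0 := sub_ne_zero.mpr hs
  have hmul := riemannZeta_eq_inv_sub_mul hs
  have hζ₁ : riemannZeta₁ s ≠ 0 := right_ne_zero_of_mul (hmul ▸ h0)
  rw [logDeriv_apply, deriv_riemannZeta_eq_neg_inv_sub_sq_mul_add hs, hmul]
  field_simp
  ring

lemma mellin_psi₁ {s : ℂ} (hs : 1 < s.re) :
    mellin (fun x => (psi₁ x : ℂ)) (-s - 1) =
      (-deriv riemannZeta s / riemannZeta s) / (s * (s + 1)) := by
  rw [← ArithmeticFunction.LSeries_vonMangoldt_eq_deriv_riemannZeta_div hs,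
    ← mellin_tsum_mul_max_sub (by simp) (by linarith)
      (ArithmeticFunction.LSeriesSummable_vonMangoldt hs)]
  simp [psi₁, Complex.ofReal_tsum]

lemma locallyIntegrable_psi₁Error : LocallyIntegrable fun x => (psi₁Error x : ℂ) :=
  (Complex.continuous_ofReal.comp continuous_psi₁Error).locallyIntegrable

lemma mellinConvergent_psi₁Error {c : ℝ} (h : (fun x => (psi₁Error x : ℂ)) =O[atTop] fun x => x ^ c)
    {s : ℂ} (hs : c < s.re + 1) : MellinConvergent (fun x => (psi₁Error x : ℂ)) (-s - 1) :=
  mellinConvergent_of_isBigO_rpow (a := -c) (b := -s.re - 2)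
    (locallyIntegrable_psi₁Error.locallyIntegrableOn _) (by simpa using h) (by simp; linarith)
    (psi₁Error_isBigO_zero _) (by simp)

lemma differentiableAt_mellin_psi₁Error {c : ℝ}
    (h : (fun x => (psi₁Error x : ℂ)) =O[atTop] fun x => x ^ c) {s : ℂ} (hs : c < s.re + 1) :
    DifferentiableAt ℂ (fun z => mellin (fun x => (psi₁Error x : ℂ)) (-z - 1)) s :=
  DifferentiableAt.fun_comp' s
    (mellin_differentiableAt_of_isBigO_rpow (a := -c) (b := -s.re - 2)
      (locallyIntegrable_psi₁Error.locallyIntegrableOn _) (by simpa using h) (by simp; linarith)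
      (psi₁Error_isBigO_zero _) (by simp)) (by fun_prop)

lemma mellin_psi₁Error {s : ℂ} (hs : 1 < s.re) :
    mellin (fun x => (psi₁Error x : ℂ)) (-s - 1) = -logDeriv riemannZeta₁ s / (s * (s + 1)) := by
  have hs0 : s ≠ 0 := Complex.ne_zero_of_re_pos (by linarith)
  have hs1 : s + 1 ≠ 0 := Complex.ne_zero_of_re_pos (by simp; linarith)
  have hs2 : s - 1 ≠ 0 := Complex.ne_zero_of_re_pos (by simp; linarith)
  have hmain := hasMellin_sq_max_sub_one hs
  have h := (hasMellin_add
    (mellinConvergent_psi₁Error psi₁Error_isBigO_sq (by linarith)) hmain.1).2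
  have hpsi (x : ℝ) : (psi₁Error x : ℂ) + (((max (x - 1) 0) ^ 2 / 2 : ℝ) : ℂ) = psi₁ x := by
    simp [psi₁Error]
  simp_rw [hpsi] at h
  rw [mellin_psi₁ hs, hmain.2, neg_deriv_riemannZeta_div (sub_ne_zero.mp hs2)
    (riemannZeta_ne_zero_of_one_lt_re hs)] at h
  rw [eq_sub_of_add_eq h.symm]
  field_simp
  ring

end Mellin

section ZeroFree

lemma riemannZeta₁_eq_sub_one_mul {s : ℂ} (hs : s ≠ 1) :
    riemannZeta₁ s = (s - 1) * riemannZeta s := by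
  rw [riemannZeta_eq_inv_sub_mul hs, mul_inv_cancel_left₀ (sub_ne_zero.mpr hs)]

lemma riemannZeta₁_eq_zero_iff {s : ℂ} (hs : s ≠ 1) : riemannZeta₁ s = 0 ↔ riemannZeta s = 0 := by
  rw [riemannZeta₁_eq_sub_one_mul hs, mul_eq_zero_iff_left (sub_ne_zero.mpr hs)]

lemma riemannZeta₁_ne_zero_of_one_le_re {s : ℂ} (hs : 1 ≤ s.re) : riemannZeta₁ s ≠ 0 := by
  by_cases h1 : s = 1
  · simp [h1]
  · exact (riemannZeta₁_eq_zero_iff h1).not.mpr (riemannZeta_ne_zero_of_one_le_re hs)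

lemma RH_iff_riemannZeta₁_ne_zero : RH ↔ ∀ s : ℂ, 1 / 2 < s.re → riemannZeta₁ s ≠ 0 := by
  refine ⟨fun h s hs hz => ?_, fun h s h0 hpos hlt => ?_⟩
  · have hlt : s.re < 1 := not_le.mp fun h1 => riemannZeta₁_ne_zero_of_one_le_re h1 hz
    have h1 : s ≠ 1 := by rintro rfl; simp at hlt
    linarith [h s ((riemannZeta₁_eq_zero_iff h1).mp hz) (by linarith) hlt]
  · have hle {z : ℂ} (hz : riemannZeta z = 0) (hz1 : z.re < 1) : z.re ≤ 1 / 2 := by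
      have h1 : z ≠ 1 := by rintro rfl; simp at hz1
      exact not_lt.mp fun hre => h z hre ((riemannZeta₁_eq_zero_iff h1).mpr hz)
    have hsymm : riemannZeta (1 - s) = 0 := by
      rw [riemannZeta_one_sub (fun n hn => ?_) (by rintro rfl; simp at hlt), h0, mul_zero]
      simp only [hn, Complex.neg_re, Complex.natCast_re] at hpos
      linarith [n.cast_nonneg (α := ℝ)]
    have := hle hsymm (by simpa using hpos)
    rw [Complex.sub_re, Complex.one_re] at this
    linarith [hle h0 hlt]

/-- A zero of `f` would have order `k ≥ 1` for `f`, but `k - 1` for `f'` and `≥ k` for `g * f`. -/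
lemma eventuallyEq_zero_of_deriv_eq_mul {f g : ℂ → ℂ} {z : ℂ} (hf : AnalyticAt ℂ f z)
    (hg : AnalyticAt ℂ g z) (h : deriv f =ᶠ[𝓝 z] g * f) (hz : f z = 0) : f =ᶠ[𝓝 z] 0 := by
  by_contra hne
  have hfin : analyticOrderAt f z ≠ ⊤ := fun htop => hne (analyticOrderAt_eq_top.mp htop)
  have hord := hf.analyticOrderAt_deriv_add_one
  simp only [hz, sub_zero] at hord
  rw [analyticOrderAt_congr h, analyticOrderAt_mul hg hf] at hord
  have : analyticOrderAt f z + 1 ≤ analyticOrderAt f z := by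
    conv_rhs => rw [← hord]
    gcongr
    exact le_add_self
  exact absurd this (not_le.mpr ((ENat.lt_add_one_iff hfin).mpr le_rfl))

lemma ne_zero_of_deriv_eventuallyEq_mul {f g : ℂ → ℂ} {U : Set ℂ} (hU : IsOpen U)
    (hU' : IsPreconnected U) (hf : AnalyticOnNhd ℂ f U) (hg : AnalyticOnNhd ℂ g U) {z₀ : ℂ}
    (hz₀ : z₀ ∈ U) (h : deriv f =ᶠ[𝓝 z₀] g * f) (hne : f z₀ ≠ 0) {z : ℂ} (hz : z ∈ U) :
    f z ≠ 0 := by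
  intro h0
  have hode : EqOn (deriv f) (g * f) U :=
    hf.deriv.eqOn_of_preconnected_of_eventuallyEq (hg.mul hf) hU' hz₀ h
  have hzero := eventuallyEq_zero_of_deriv_eq_mul (hf z hz) (hg z hz)
    (hode.eventuallyEq_of_mem (hU.mem_nhds hz)) h0
  exact hne (hf.eqOn_of_preconnected_of_eventuallyEq (fun _ _ => analyticAt_const) hU' hz hzero hz₀)

/-- The Mellin transform of `psi₁Error` continues `ζ₁' / ζ₁` analytically. -/
lemma riemannZeta₁_ne_zero_of_isBigO {c : ℝ} (hc : c ≤ 2)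
    (h : (fun x => (psi₁Error x : ℂ)) =O[atTop] fun x => x ^ c) {s : ℂ} (hs : c - 1 < s.re) :
    riemannZeta₁ s ≠ 0 := by
  set g : ℂ → ℂ := fun z => -(z * (z + 1)) * mellin (fun x => (psi₁Error x : ℂ)) (-z - 1)
  have hU : IsOpen {z : ℂ | c - 1 < z.re} := isOpen_lt continuous_const Complex.continuous_re
  have hg : AnalyticOnNhd ℂ g {z | c - 1 < z.re} := by
    refine DifferentiableOn.analyticOnNhd (fun z hz => ?_) hU
    have := differentiableAt_mellin_psi₁Error h (sub_lt_iff_lt_add.mp hz)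
    exact (DifferentiableAt.mul (by fun_prop) this).differentiableWithinAt
  have hode : deriv riemannZeta₁ =ᶠ[𝓝 2] g * riemannZeta₁ := by
    filter_upwards [(isOpen_lt continuous_const Complex.continuous_re).mem_nhds
      (show (1 : ℝ) < (2 : ℂ).re by simp)] with z (hz : 1 < z.re)
    have hz0 : z ≠ 0 := Complex.ne_zero_of_re_pos (by linarith)
    have hz1 : z + 1 ≠ 0 := Complex.ne_zero_of_re_pos (by simp; linarith)
    have hne := riemannZeta₁_ne_zero_of_one_le_re hz.le
    simp only [Pi.mul_apply, g]
    rw [mellin_psi₁Error hz, logDeriv_apply]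
    field_simp
  exact ne_zero_of_deriv_eventuallyEq_mul hU (convex_halfSpace_re_gt _).isPreconnected
    (fun z _ => differentiable_riemannZeta₁.analyticAt z) hg
    (by rw [mem_ofPred_eq, Complex.re_ofNat]; linarith) hode
    (riemannZeta₁_ne_zero_of_one_le_re (by simp)) hs

lemma psi₁Error_isBigO_of_natCast {c C : ℝ} (hc : 1 ≤ c)
    (h : ∀ n : ℕ, 0 < n → |psi₁ n - (n : ℝ) ^ 2 / 2| ≤ C * (n : ℝ) ^ c) :
    (fun x => (psi₁Error x : ℂ)) =O[atTop] fun x : ℝ => x ^ c := by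
  have hC : 0 ≤ C := by simpa using (abs_nonneg _).trans (h 1 one_pos)
  refine IsBigO.of_bound (2 + C * 2 ^ c) ?_
  filter_upwards [eventually_ge_atTop 1] with x hx
  have hx0 : 0 ≤ x := zero_le_one.trans hx
  obtain ⟨n, hn, hnx, hxn⟩ : ∃ n : ℕ, 0 < n ∧ (n : ℝ) ≤ x ∧ x < (n + 1 : ℕ) :=
    ⟨⌊x⌋₊, Nat.floor_pos.mpr hx, Nat.floor_le hx0, by exact_mod_cast Nat.lt_floor_add_one x⟩
  have hpow_le : C * (n : ℝ) ^ c ≤ C * 2 ^ c * x ^ c := by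
    rw [mul_assoc, ← Real.mul_rpow zero_le_two hx0]
    gcongr
    linarith
  have hpow_succ_le : C * ((n + 1 : ℕ) : ℝ) ^ c ≤ C * 2 ^ c * x ^ c := by
    rw [mul_assoc, ← Real.mul_rpow zero_le_two hx0]
    gcongr
    push_cast
    linarith
  have hx_le : x ≤ x ^ c := Real.self_le_rpow_of_one_le hx hc
  have hlower := (abs_le.mp (h n hn)).1
  have hupper := (abs_le.mp (h (n + 1) n.succ_pos)).2
  have hmono := psi₁_mono hnx
  have hmono' := psi₁_mono hxn.le
  rw [Complex.norm_real, Real.norm_eq_abs, Real.norm_of_nonneg (Real.rpow_nonneg hx0 c), psi₁Error,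
    max_eq_left (by linarith), abs_le]
  push_cast at hxn hupper hpow_succ_le hmono'
  constructor <;> nlinarith

end ZeroFree

section ZetaBounds

/-- The fractional part cut off to `(1, ∞)`; its Mellin transform gives `ζ` on `Re s > 0`. -/
noncomputable def fractTail : ℝ → ℂ := (Ioi 1).indicator fun x => ((Int.fract x : ℝ) : ℂ)

lemma norm_fractTail_le (x : ℝ) : ‖fractTail x‖ ≤ (Ioi (1 : ℝ)).indicator 1 x := by
  rw [fractTail, norm_indicator_eq_indicator_norm]
  refine indicator_le_indicator (f := fun x : ℝ => ‖((Int.fract x : ℝ) : ℂ)‖) ?_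
  simpa [abs_of_nonneg (Int.fract_nonneg x)] using (Int.fract_lt_one x).le

lemma locallyIntegrable_fractTail : LocallyIntegrable fractTail := by
  refine (locallyIntegrable_const (1 : ℝ)).mono
    (Measurable.indicator (by fun_prop) measurableSet_Ioi).aestronglyMeasurable
    (ae_of_all _ fun x => ?_)
  rw [norm_one]
  exact (norm_fractTail_le x).trans (indicator_le_self' (fun _ _ => zero_le_one) x)

lemma fractTail_isBigO_one : fractTail =O[atTop] fun x : ℝ => x ^ (-0 : ℝ) := by
  refine IsBigO.of_bound 1 (Eventually.of_forall fun x => ?_)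
  simpa using (norm_fractTail_le x).trans (indicator_le_self' (fun _ _ => zero_le_one) x)

lemma fractTail_isBigO_zero (b : ℝ) : fractTail =O[𝓝[>] 0] fun x : ℝ => x ^ (-b) := by
  have h : fractTail =ᶠ[𝓝[>] 0] 0 := by
    filter_upwards [nhdsWithin_le_nhds (Iic_mem_nhds (zero_lt_one' ℝ))] with x hx
    exact indicator_of_notMem (notMem_Ioi.mpr hx) _
  exact h.trans_isBigO (isBigO_zero _ _)

lemma mellinConvergent_fractTail {s : ℂ} (hs : 0 < s.re) : MellinConvergent fractTail (-s) :=
  mellinConvergent_of_isBigO_rpow (locallyIntegrable_fractTail.locallyIntegrableOn _)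
    fractTail_isBigO_one (by simpa using hs) (fractTail_isBigO_zero (-s.re - 1)) (by simp)

lemma differentiableAt_mellin_fractTail {s : ℂ} (hs : 0 < s.re) :
    DifferentiableAt ℂ (fun z => mellin fractTail (-z)) s :=
  DifferentiableAt.fun_comp' s
    (mellin_differentiableAt_of_isBigO_rpow (locallyIntegrable_fractTail.locallyIntegrableOn _)
      fractTail_isBigO_one (by simpa using hs) (fractTail_isBigO_zero (-s.re - 1)) (by simp))
    (by fun_prop)

lemma norm_mellin_fractTail_le {s : ℂ} (hs : 0 < s.re) : ‖mellin fractTail (-s)‖ ≤ 1 / s.re := by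
  have hint : IntegrableOn (fun x : ℝ => x ^ (-s.re - 1)) (Ioi 1) :=
    integrableOn_Ioi_rpow_of_lt (by linarith) one_pos
  have hval : ∫ x : ℝ in Ioi 0, (Ioi (1 : ℝ)).indicator (fun x => x ^ (-s.re - 1)) x =
      1 / s.re := by
    rw [setIntegral_indicator measurableSet_Ioi, Ioi_inter_Ioi, sup_eq_right.mpr zero_le_one,
      integral_Ioi_rpow_of_lt (by linarith) one_pos]
    simp
  rw [← hval]
  refine norm_integral_le_of_norm_le
    ((integrable_indicator_iff measurableSet_Ioi).mpr hint).integrableOn ?_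
  filter_upwards [ae_restrict_mem measurableSet_Ioi] with x hx
  rw [norm_smul, Complex.norm_cpow_eq_rpow_re_of_pos hx]
  refine (mul_le_mul_of_nonneg_left (norm_fractTail_le x)
    (Real.rpow_nonneg (mem_Ioi.mp hx).le _)).trans_eq ?_
  by_cases hx1 : x ∈ Ioi (1 : ℝ) <;> simp [hx1]

lemma riemannZeta_eq_integral_floor {s : ℂ} (hs : 1 < s.re) :
    riemannZeta s = s * ∫ x : ℝ in Ioi 1, (⌊x⌋₊ : ℂ) * (x : ℂ) ^ (-(s + 1)) := by
  have h := LSeries_eq_mul_integral_of_nonneg (fun _ => 1) zero_le_one hs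
    (IsBigO.of_bound 1 (Eventually.of_forall fun n => by simp)) (fun _ => zero_le_one)
  rw [← LSeries_one_eq_riemannZeta hs, Pi.one_def]
  simpa using h

lemma riemannZeta_eq_mellin_fractTail {s : ℂ} (hs : 1 < s.re) :
    riemannZeta s = s / (s - 1) - s * mellin fractTail (-s) := by
  have hs1 : s - 1 ≠ 0 := Complex.ne_zero_of_re_pos (by simp; linarith)
  have hs1' : -s + 1 ≠ 0 := by rw [neg_add_eq_sub, ← neg_sub]; exact neg_ne_zero.mpr hs1
  have hmain := hasMellin_indicator_Ioi_cpow one_pos (p := 1) (z := -s) (by simpa using hs)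
  have h := (hasMellin_sub hmain.1 (mellinConvergent_fractTail (by linarith))).2
  rw [hmain.2] at h
  have hfloor : mellin (fun x => (Ioi 1).indicator (fun x : ℝ => (x : ℂ) ^ (1 : ℂ)) x -
      fractTail x) (-s) = ∫ x : ℝ in Ioi 1, (⌊x⌋₊ : ℂ) * (x : ℂ) ^ (-(s + 1)) := by
    have hpow (x : ℝ) : (x : ℂ) ^ (-s - 1) • ((Ioi 1).indicator (fun x : ℝ => (x : ℂ) ^ (1 : ℂ)) x -
        fractTail x) = (Ioi 1).indicator (fun x : ℝ => (⌊x⌋₊ : ℂ) * (x : ℂ) ^ (-(s + 1))) x := by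
      by_cases hx : x ∈ Ioi (1 : ℝ)
      · have hfl : (⌊x⌋₊ : ℝ) = ⌊x⌋ :=
          natCast_floor_eq_intCast_floor (zero_le_one.trans (mem_Ioi.mp hx).le)
        simp only [fractTail, indicator_of_mem hx, Complex.cpow_one, smul_eq_mul, neg_add']
        rw [mul_comm, ← Complex.ofReal_sub, Int.self_sub_fract, ← hfl, Complex.ofReal_natCast]
      · simp [fractTail, hx]
    simp_rw [mellin, hpow]
    rw [setIntegral_indicator measurableSet_Ioi, Ioi_inter_Ioi, sup_eq_right.mpr zero_le_one]
  rw [riemannZeta_eq_integral_floor hs, ← hfloor, h, Complex.ofReal_one, Complex.one_cpow]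
  field_simp
  ring

lemma riemannZeta₁_eq_mellin_fractTail {s : ℂ} (hs : 0 < s.re) :
    riemannZeta₁ s = s - s * (s - 1) * mellin fractTail (-s) := by
  refine AnalyticOnNhd.eqOn_of_preconnected_of_eventuallyEq (z₀ := 2) (f := riemannZeta₁)
    (g := fun s => s - s * (s - 1) * mellin fractTail (-s)) (U := {z : ℂ | 0 < z.re})
    (fun z _ => differentiable_riemannZeta₁.analyticAt z)
    (DifferentiableOn.analyticOnNhd (fun z hz => ?_)
      (isOpen_lt continuous_const Complex.continuous_re))
    (convex_halfSpace_re_gt 0).isPreconnected (by simp) ?_ hs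
  · have := differentiableAt_mellin_fractTail hz
    exact DifferentiableAt.differentiableWithinAt (by fun_prop)
  · filter_upwards [(isOpen_lt continuous_const Complex.continuous_re).mem_nhds
      (show (1 : ℝ) < (2 : ℂ).re by simp)] with z (hz : 1 < z.re)
    have hz1 : z - 1 ≠ 0 := Complex.ne_zero_of_re_pos (by simp; linarith)
    rw [riemannZeta₁_eq_sub_one_mul (sub_ne_zero.mp hz1), riemannZeta_eq_mellin_fractTail hz]
    field_simp

lemma norm_riemannZeta₁_le {s : ℂ} (hs : 0 < s.re) :
    ‖riemannZeta₁ s‖ ≤ ‖s‖ + ‖s‖ * ‖s - 1‖ / s.re := by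
  rw [riemannZeta₁_eq_mellin_fractTail hs]
  refine (norm_sub_le _ _).trans ?_
  rw [norm_mul, norm_mul, div_eq_mul_one_div]
  gcongr
  exact norm_mellin_fractTail_le hs

lemma norm_riemannZeta_sub_one_le {s : ℂ} (hs : 2 ≤ s.re) : ‖riemannZeta s - 1‖ ≤ 3 / 4 := by
  have htail : HasSum (fun n : ℕ => 1 / ((n + 1 + 1 : ℕ) : ℝ) ^ 2) (π ^ 2 / 6 - 1) := by
    have h := (hasSum_nat_add_iff' (f := fun n : ℕ => 1 / (n : ℝ) ^ 2) 2).mpr hasSum_zeta_two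
    simpa [Finset.sum_range_succ, add_assoc, one_add_one_eq_two] using h
  have hnorm (n : ℕ) : ‖1 / ((n + 1 : ℕ) + 1 : ℂ) ^ s‖ ≤ 1 / ((n + 1 + 1 : ℕ) : ℝ) ^ 2 := by
    rw [norm_div, norm_one, ← Nat.cast_add_one, Complex.norm_natCast_cpow_of_pos (by omega),
      ← Real.rpow_natCast]
    gcongr
    · norm_cast
      omega
    · exact_mod_cast hs
  have hsum : Summable fun n : ℕ => 1 / ((n : ℂ) + 1) ^ s := by
    rw [← summable_nat_add_iff 1]
    exact Summable.of_norm_bounded htail.summable hnorm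
  rw [zeta_eq_tsum_one_div_nat_add_one_cpow (by linarith), hsum.tsum_eq_zero_add]
  calc _ = ‖∑' n : ℕ, 1 / ((n + 1 : ℕ) + 1 : ℂ) ^ s‖ := by simp
    _ ≤ π ^ 2 / 6 - 1 := tsum_of_norm_bounded htail hnorm
    _ ≤ 3 / 4 := by nlinarith [Real.pi_lt_d2, Real.pi_pos]

end ZetaBounds

section LogDerivBounds

lemma quarter_le_norm_riemannZeta₁ {s : ℂ} (hs : 2 ≤ s.re) : 1 / 4 ≤ ‖riemannZeta₁ s‖ := by
  rw [riemannZeta₁_eq_sub_one_mul (by rintro rfl; norm_num at hs), norm_mul]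
  have hζ : 1 / 4 ≤ ‖riemannZeta s‖ := by
    have h := norm_sub_norm_le 1 (riemannZeta s)
    rw [norm_one, norm_sub_rev] at h
    linarith [norm_riemannZeta_sub_one_le hs]
  have h1 : 1 ≤ ‖s - 1‖ := by
    have h := Complex.re_le_norm (s - 1)
    rw [Complex.sub_re, Complex.one_re] at h
    linarith
  nlinarith

lemma exists_hasDerivAt_logDeriv_of_ne_zero {G : ℂ → ℂ} {c : ℂ} {R : ℝ}
    (hd : DifferentiableOn ℂ G (Metric.ball c R)) (hne : ∀ z ∈ Metric.ball c R, G z ≠ 0) :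
    ∃ L : ℂ → ℂ, L c = 0 ∧ ∀ z ∈ Metric.ball c R,
      HasDerivAt L (logDeriv G z) z ∧ G z = G c * Complex.exp (L z) := by
  have hdl : DifferentiableOn ℂ (logDeriv G) (Metric.ball c R) :=
    (hd.deriv Metric.isOpen_ball).div hd hne
  obtain ⟨L, hLc, hL⟩ := hdl.isExactOn_ball.with_val_at c 0
  have hder (w : ℂ) (hw : w ∈ Metric.ball c R) :
      HasDerivAt (fun w => G w * Complex.exp (-L w)) 0 w := by
    refine ((hd.differentiableAt (Metric.isOpen_ball.mem_nhds hw)).hasDerivAt.mul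
      (hL w hw).neg.cexp).congr_deriv ?_
    have := hne w hw
    simp only [logDeriv_apply, Pi.neg_apply]
    field_simp
    ring
  refine ⟨L, hLc, fun z hz => ⟨hL z hz, ?_⟩⟩
  have hconst := Metric.isOpen_ball.is_const_of_deriv_eq_zero (convex_ball c R).isPreconnected
    (fun w hw => (hder w hw).differentiableAt.differentiableWithinAt)
    (fun w hw => (hder w hw).deriv) hz (Metric.mem_ball_self (Metric.pos_of_mem_ball hz))
  simp only [hLc, neg_zero, Complex.exp_zero, mul_one] at hconst
  rw [← hconst, mul_assoc, ← Complex.exp_add, neg_add_cancel, Complex.exp_zero, mul_one]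

lemma exists_log_norm_le {G : ℂ → ℂ} {c : ℂ} {M R : ℝ} (hM : 0 < M)
    (hd : DifferentiableOn ℂ G (Metric.ball c R)) (hne : ∀ z ∈ Metric.ball c R, G z ≠ 0)
    (hle : ∀ z ∈ Metric.ball c R, ‖G z‖ ≤ ‖G c‖ * Real.exp M) :
    ∃ L : ℂ → ℂ, ∀ z ∈ Metric.ball c R, HasDerivAt L (logDeriv G z) z ∧
      G z = G c * Complex.exp (L z) ∧ ‖L z‖ ≤ 2 * M * ‖z - c‖ / (R - ‖z - c‖) := by
  obtain ⟨L, hLc, hL⟩ := exists_hasDerivAt_logDeriv_of_ne_zero hd hne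
  refine ⟨L, fun z hz => ⟨(hL z hz).1, (hL z hz).2, ?_⟩⟩
  have hR : 0 < R := Metric.pos_of_mem_ball hz
  have hmem {w : ℂ} (hw : w ∈ Metric.ball (0 : ℂ) R) : c + w ∈ Metric.ball c R := by
    simpa [dist_eq_norm] using hw
  have hdiff : DifferentiableOn ℂ (fun w => L (c + w)) (Metric.ball 0 R) := fun w hw =>
    (DifferentiableAt.fun_comp' w (hL _ (hmem hw)).1.differentiableAt
      (by fun_prop)).differentiableWithinAt
  have hre : MapsTo (fun w => L (c + w)) (Metric.ball 0 R) {z | z.re ≤ M} := fun w hw => by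
    have h := hle _ (hmem hw)
    rw [(hL _ (hmem hw)).2, norm_mul, Complex.norm_exp] at h
    exact Real.exp_le_exp.mp
      (le_of_mul_le_mul_left h (norm_pos_iff.mpr (hne c (Metric.mem_ball_self hR))))
  simpa using Complex.borelCaratheodory_zero (f := fun w => L (c + w)) (z := z - c) hM hdiff hre hR
    (by simpa [dist_eq_norm] using hz) (by simpa using hLc)

lemma norm_logDeriv_le_and_norm_inv_le {G : ℂ → ℂ} {c s : ℂ} {M R h : ℝ} (hM : 0 < M) (h0 : 0 < h)
    (hd : DifferentiableOn ℂ G (Metric.ball c R)) (hne : ∀ z ∈ Metric.ball c R, G z ≠ 0)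
    (hle : ∀ z ∈ Metric.ball c R, ‖G z‖ ≤ ‖G c‖ * Real.exp M) (hs : ‖s - c‖ ≤ R - h) :
    ‖logDeriv G s‖ ≤ 8 * M * R / h ^ 2 ∧ ‖(G s)⁻¹‖ ≤ ‖(G c)⁻¹‖ * Real.exp (2 * M * R / h) := by
  have hR : 0 < R := by linarith [norm_nonneg (s - c)]
  obtain ⟨L, hL⟩ := exists_log_norm_le hM hd hne hle
  have hnear {k : ℝ} (hk : k < h) {z : ℂ} (hz : ‖z - s‖ ≤ k) :
      z ∈ Metric.ball c R ∧ ‖L z‖ ≤ 2 * M * R / (h - k) := by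
    have hzc : ‖z - c‖ ≤ R - (h - k) := by
      linarith [norm_sub_le_norm_sub_add_norm_sub z s c]
    have hmem : z ∈ Metric.ball c R := by rw [Metric.mem_ball, dist_eq_norm]; linarith
    refine ⟨hmem, (hL z hmem).2.2.trans ?_⟩
    exact div_le_div₀ (by positivity) (by gcongr; linarith) (by linarith) (by linarith)
  obtain ⟨hsmem, hLs⟩ := hnear h0 (z := s) (by simp)
  constructor
  · have hhalf {z : ℂ} (hz : z ∈ Metric.closedBall s (h / 2)) :=
      hnear (half_lt_self h0) (mem_closedBall_iff_norm.mp hz)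
    rw [← (hL s hsmem).1.deriv]
    have hcauchy := Complex.norm_deriv_le_of_forall_mem_sphere_norm_le (half_pos h0)
      (DifferentiableOn.diffContOnCl fun z hz => (hL z (hhalf
        (Metric.closure_ball_subset_closedBall hz)).1).1.differentiableAt.differentiableWithinAt)
      (fun z hz => (hhalf (Metric.sphere_subset_closedBall hz)).2)
    refine hcauchy.trans_eq ?_
    field_simp
    norm_num
  · rw [(hL s hsmem).2.1, mul_inv, norm_mul, ← Complex.exp_neg, Complex.norm_exp, Complex.neg_re]
    rw [sub_zero] at hLs
    gcongr
    exact (neg_le_abs _).trans ((Complex.abs_re_le_norm _).trans hLs)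

lemma norm_riemannZeta₁_le_mul_sq {s : ℂ} {ε : ℝ} (hε : 0 < ε) (hs : ε ≤ s.re) :
    ‖riemannZeta₁ s‖ ≤ (1 + 1 / ε) * (‖s‖ + 1) ^ 2 :=
  calc ‖riemannZeta₁ s‖ ≤ ‖s‖ + ‖s‖ * ‖s - 1‖ / s.re := norm_riemannZeta₁_le (hε.trans_le hs)
    _ ≤ (‖s‖ + 1) ^ 2 + (‖s‖ + 1) * (‖s‖ + 1) / ε := by
      gcongr
      · nlinarith [norm_nonneg s]
      · linarith
      · simpa using norm_sub_le s 1
    _ = (1 + 1 / ε) * (‖s‖ + 1) ^ 2 := by ring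

lemma norm_riemannZeta₁_le_exp {s z : ℂ} (hz : 1 / 2 ≤ z.re) (hzs : ‖z‖ ≤ ‖s‖ + 3) :
    ‖riemannZeta₁ z‖ ≤ 1 / 4 * Real.exp (16 * √(‖s‖ + 4)) := by
  set v := √(‖s‖ + 4)
  have hv : v ^ 2 = ‖s‖ + 4 := Real.sq_sqrt (by positivity)
  have hv1 : 1 ≤ v := Real.one_le_sqrt.mpr (by linarith [norm_nonneg s])
  calc ‖riemannZeta₁ z‖ ≤ (1 + 1 / (1 / 2)) * (‖z‖ + 1) ^ 2 :=
      norm_riemannZeta₁_le_mul_sq (by norm_num) hz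
    _ ≤ (1 + 1 / (1 / 2)) * (v ^ 2) ^ 2 := by gcongr; linarith
    _ = 1 / 4 * (12 * v ^ 4) := by ring
    _ ≤ 1 / 4 * (Real.exp (12 * v) * Real.exp v ^ 4) := by
      gcongr
      · linarith [Real.add_one_le_exp (12 * v)]
      · linarith [Real.add_one_le_exp v]
    _ = 1 / 4 * Real.exp (16 * v) := by
      rw [← Real.exp_nat_mul, ← Real.exp_add]
      norm_num
      ring

lemma norm_logDeriv_riemannZeta₁_le_and_norm_inv_le
    (hζ : ∀ s : ℂ, 1 / 2 < s.re → riemannZeta₁ s ≠ 0) {h : ℝ} (h0 : 0 < h) (hh : h ≤ 3 / 2) {s : ℂ}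
    (hs : 1 / 2 + h ≤ s.re) :
    ‖logDeriv riemannZeta₁ s‖ ≤ 192 / h ^ 2 * √(‖s‖ + 4) ∧
      ‖(riemannZeta₁ s)⁻¹‖ ≤ 4 * Real.exp (48 / h * √(‖s‖ + 4)) := by
  set c : ℂ := ⟨max 2 s.re, s.im⟩ with hc
  have hc2 : 1 / 4 ≤ ‖riemannZeta₁ c‖ := quarter_le_norm_riemannZeta₁ (le_max_left _ _)
  have hsc : ‖s - c‖ ≤ 3 / 2 - h := by
    have hreal : s - c = ((s.re - max 2 s.re : ℝ) : ℂ) := by apply Complex.ext <;> simp [hc]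
    rw [hreal, Complex.norm_real, Real.norm_eq_abs, abs_le]
    rcases le_total 2 s.re with h2 | h2
    · rw [max_eq_right h2]; constructor <;> linarith
    · rw [max_eq_left h2]; constructor <;> linarith
  have hball {z : ℂ} (hz : z ∈ Metric.ball c (3 / 2)) : 1 / 2 < z.re := by
    have hre := (abs_le.mp (Complex.abs_re_le_norm (z - c))).1
    rw [Complex.sub_re] at hre
    linarith [mem_ball_iff_norm.mp hz, show 2 ≤ c.re from le_max_left _ _]
  have hle (z : ℂ) (hz : z ∈ Metric.ball c (3 / 2)) :
      ‖riemannZeta₁ z‖ ≤ ‖riemannZeta₁ c‖ * Real.exp (16 * √(‖s‖ + 4)) := by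
    refine (norm_riemannZeta₁_le_exp (hball hz).le ?_).trans (by gcongr)
    linarith [mem_ball_iff_norm.mp hz, norm_sub_le_norm_sub_add_norm_sub z c s,
      norm_sub_rev c s, norm_le_norm_add_norm_sub' z s]
  obtain ⟨hD, hinv⟩ := norm_logDeriv_le_and_norm_inv_le (by positivity) h0
    differentiable_riemannZeta₁.differentiableOn (fun z hz => hζ z (hball hz)) hle hsc
  refine ⟨hD.trans_eq (by ring), hinv.trans ?_⟩
  gcongr
  · rw [norm_inv]
    exact inv_le_of_inv_le₀ (by norm_num) (by simpa using hc2)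
  · exact le_of_eq (by ring)

end LogDerivBounds

section Gamma

lemma intervalIntegral_one_sub_rpow {h : ℝ} (h0 : 0 < h) :
    ∫ x in (0 : ℝ)..1, (1 - x) ^ (h - 1) = 1 / h := by
  rw [intervalIntegral.integral_comp_sub_left (fun x => x ^ (h - 1)) 1,
    integral_rpow (Or.inl (by linarith))]
  simp [h0.ne']

lemma norm_betaIntegral_le {a : ℂ} (ha : 1 ≤ a.re) {h : ℝ} (h0 : 0 < h) :
    ‖Complex.betaIntegral a h‖ ≤ 1 / h := by
  have hint : IntervalIntegrable (fun x : ℝ => (1 - x) ^ (h - 1)) volume 0 1 := by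
    simpa using ((intervalIntegral.intervalIntegrable_rpow' (a := 0) (b := 1) (r := h - 1)
      (by linarith)).comp_sub_left 1).symm
  rw [← intervalIntegral_one_sub_rpow h0]
  refine intervalIntegral.norm_integral_le_of_norm_le zero_le_one ?_ hint
  filter_upwards [Measure.ae_ne volume 1] with x hx1 hx
  have hlt : x < 1 := lt_of_le_of_ne hx.2 hx1
  rw [norm_mul, Complex.norm_cpow_eq_rpow_re_of_pos hx.1, ← Complex.ofReal_one,
    ← Complex.ofReal_sub, Complex.norm_cpow_eq_rpow_re_of_pos (sub_pos.mpr hlt),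
    ← Complex.ofReal_sub, Complex.ofReal_re]
  exact mul_le_of_le_one_left (Real.rpow_nonneg (sub_pos.mpr hlt).le _)
    (Real.rpow_le_one hx.1.le hlt.le (by simpa using ha))

lemma norm_Gamma_le_mul_norm_Gamma_add {a : ℂ} (ha : 1 ≤ a.re) {h : ℝ} (h0 : 0 < h) :
    ‖Complex.Gamma a‖ ≤ 1 / h / ‖Complex.Gamma h‖ * ‖Complex.Gamma (a + h)‖ := by
  have hΓ : 0 < ‖Complex.Gamma h‖ :=
    norm_pos_iff.mpr (Complex.Gamma_ne_zero_of_re_pos (by simpa using h0))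
  have hbeta := congrArg norm (Complex.Gamma_mul_Gamma_eq_betaIntegral (s := a) (t := h)
    (by linarith) (by simpa using h0))
  rw [norm_mul, norm_mul] at hbeta
  rw [div_mul_eq_mul_div, le_div_iff₀ hΓ, hbeta, mul_comm]
  gcongr
  exact norm_betaIntegral_le ha h0

lemma log_norm_add_sub_log_norm {w : ℂ} (hw0 : w ≠ 0) (hw : 0 ≤ w.re) {t : ℝ} (ht : 0 ≤ t) :
    Real.log ‖w + t‖ - Real.log ‖w‖ =
      1 / 2 * Real.log (1 + (2 * t * w.re + t ^ 2) / ‖w‖ ^ 2) := by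
  have hr : 0 < ‖w‖ := norm_pos_iff.mpr hw0
  have hsq : ‖w + t‖ ^ 2 = ‖w‖ ^ 2 + (2 * t * w.re + t ^ 2) := by
    simp only [Complex.sq_norm, Complex.normSq_apply, Complex.add_re, Complex.add_im,
      Complex.ofReal_re, Complex.ofReal_im]
    ring
  have hdiv : 1 + (2 * t * w.re + t ^ 2) / ‖w‖ ^ 2 = (‖w + t‖ / ‖w‖) ^ 2 := by
    rw [div_pow, hsq]
    field_simp
  have hpos : 0 < ‖w + t‖ := by
    refine (norm_nonneg _).lt_of_ne fun h0 => ?_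
    rw [← h0] at hsq
    nlinarith [show 0 < ‖w‖ ^ 2 + (2 * t * w.re + t ^ 2) by positivity]
  rw [hdiv, Real.log_pow, Real.log_div hpos.ne' hr.ne']
  push_cast
  ring

lemma mul_log_norm_add_one_sub_le {w : ℂ} (hw0 : w ≠ 0) (hw : 0 ≤ w.re) {h : ℝ} (h0 : 0 ≤ h)
    (h1 : h ≤ 1) :
    h * (Real.log ‖w + 1‖ - Real.log ‖w‖) ≤
      Real.log ‖w + h‖ - Real.log ‖w‖ + h / (2 * ‖w‖ ^ 2) := by
  have : 0 < ‖w‖ := norm_pos_iff.mpr hw0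
  rw [← Complex.ofReal_one, log_norm_add_sub_log_norm hw0 hw zero_le_one,
    log_norm_add_sub_log_norm hw0 hw h0]
  set a := (2 * 1 * w.re + 1 ^ 2) / ‖w‖ ^ 2 with ha
  set b := (2 * h * w.re + h ^ 2) / ‖w‖ ^ 2 with hb
  have ha0 : 0 ≤ a := by positivity
  have : 0 ≤ b := by positivity
  have hab : h * a - b ≤ h / ‖w‖ ^ 2 := by
    rw [ha, hb, ← mul_div_assoc, ← sub_div]
    gcongr
    linarith [sq_nonneg h]
  have hbernoulli : h * Real.log (1 + a) ≤ Real.log (1 + h * a) := by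
    rw [← Real.log_rpow (by positivity)]
    exact Real.log_le_log (by positivity)
      (rpow_one_add_le_one_add_mul_self (by linarith) h0 h1)
  have hlog : Real.log (1 + h * a) - Real.log (1 + b) ≤ h / ‖w‖ ^ 2 := by
    rw [← Real.log_div (by positivity) (by positivity)]
    refine (Real.log_le_sub_one_of_pos (by positivity)).trans ?_
    rw [div_sub_one (by positivity), div_le_iff₀ (by positivity)]
    nlinarith [show 0 ≤ h / ‖w‖ ^ 2 * b by positivity]
  have hhalf : h / (2 * ‖w‖ ^ 2) = 1 / 2 * (h / ‖w‖ ^ 2) := by ring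
  rw [hhalf]
  linarith

lemma log_norm_GammaSeq {s : ℂ} (hs : 0 < s.re) {n : ℕ} (hn : n ≠ 0) :
    Real.log ‖Complex.GammaSeq s n‖ = s.re * Real.log n + Real.log n.factorial -
      ∑ j ∈ Finset.range (n + 1), Real.log ‖s + j‖ := by
  have hne (j : ℕ) : ‖s + j‖ ≠ 0 :=
    norm_ne_zero_iff.mpr (Complex.ne_zero_of_re_pos (add_pos_of_pos_of_nonneg hs (by simp)))
  rw [Complex.GammaSeq, norm_div, norm_mul, norm_prod,
    Complex.norm_natCast_cpow_of_pos (Nat.pos_of_ne_zero hn), Complex.norm_natCast,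
    Real.log_div (by positivity) (Finset.prod_ne_zero_iff.mpr fun j _ => hne j),
    Real.log_mul (by positivity) (by positivity), Real.log_rpow (by positivity),
    Real.log_prod fun j _ => hne j]

lemma sum_inv_norm_add_natCast_sq_le {a : ℂ} (ha : 1 ≤ a.re) (n : ℕ) :
    ∑ j ∈ Finset.range n, 1 / (2 * ‖a + j‖ ^ 2) ≤ 1 := by
  have hzeta : HasSum (fun j : ℕ => 1 / ((j + 1 : ℕ) : ℝ) ^ 2) (π ^ 2 / 6) := by
    have h := (hasSum_nat_add_iff' (f := fun n : ℕ => 1 / (n : ℝ) ^ 2) 1).mpr hasSum_zeta_two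
    simpa using h
  calc ∑ j ∈ Finset.range n, 1 / (2 * ‖a + j‖ ^ 2)
      ≤ ∑ j ∈ Finset.range n, 1 / 2 * (1 / ((j + 1 : ℕ) : ℝ) ^ 2) := by
        refine Finset.sum_le_sum fun j _ => ?_
        have hj : ((j + 1 : ℕ) : ℝ) ≤ ‖a + j‖ := by
          refine le_trans ?_ (Complex.re_le_norm _)
          rw [Nat.cast_add_one, Complex.add_re, Complex.natCast_re]
          linarith
        rw [one_div_mul_one_div]
        gcongr
    _ ≤ 1 / 2 * (π ^ 2 / 6) := by
        rw [← Finset.mul_sum]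
        gcongr
        exact sum_le_hasSum _ (fun j _ => by positivity) hzeta
    _ ≤ 1 := by nlinarith [Real.pi_lt_d2, Real.pi_pos]

lemma log_norm_Gamma_add_sub_le {a : ℂ} (ha : 1 ≤ a.re) {h : ℝ} (h0 : 0 ≤ h) (h1 : h ≤ 1) :
    Real.log ‖Complex.Gamma (a + h)‖ - Real.log ‖Complex.Gamma a‖ ≤ h * (Real.log ‖a‖ + 1) := by
  have hah : 0 < (a + h).re := by simp; linarith
  have htendsto {b : ℂ} (hb : 0 < b.re) : Tendsto (fun n => Real.log ‖Complex.GammaSeq b n‖) atTop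
      (𝓝 (Real.log ‖Complex.Gamma b‖)) :=
    (Complex.GammaSeq_tendsto_Gamma b).norm.log
      (norm_ne_zero_iff.mpr (Complex.Gamma_ne_zero_of_re_pos hb))
  refine le_of_tendsto ((htendsto hah).sub (htendsto (by linarith))) ?_
  filter_upwards [eventually_ne_atTop 0] with n hn
  rw [log_norm_GammaSeq hah hn, log_norm_GammaSeq (by linarith) hn]
  have hterm (j : ℕ) : h * (Real.log ‖a + (j + 1 : ℕ)‖ - Real.log ‖a + j‖) ≤
      Real.log ‖a + h + j‖ - Real.log ‖a + j‖ + h * (1 / (2 * ‖a + j‖ ^ 2)) := by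
    have hre : 0 < (a + j).re := by rw [Complex.add_re, Complex.natCast_re]; positivity
    have hj := mul_log_norm_add_one_sub_le (Complex.ne_zero_of_re_pos hre) hre.le h0 h1
    rwa [div_eq_mul_one_div, add_assoc a, ← Nat.cast_add_one, add_right_comm] at hj
  have hsum := Finset.sum_le_sum fun j (_ : j ∈ Finset.range (n + 1)) => hterm j
  rw [← Finset.mul_sum, Finset.sum_range_sub (fun j : ℕ => Real.log ‖a + (j : ℂ)‖),
    Finset.sum_add_distrib, Finset.sum_sub_distrib, ← Finset.mul_sum, Nat.cast_zero,
    add_zero] at hsum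
  have hrest := mul_le_mul_of_nonneg_left (sum_inv_norm_add_natCast_sq_le ha (n + 1)) h0
  have hlogn : h * Real.log n ≤ h * Real.log ‖a + (n + 1 : ℕ)‖ := by
    gcongr
    refine le_trans ?_ (Complex.re_le_norm _)
    simp
    linarith
  rw [Complex.add_re, Complex.ofReal_re]
  linarith

lemma hasDerivAt_log_norm_add {f : ℂ → ℂ} {s : ℂ} (hf : DifferentiableAt ℂ f s) (hs : f s ≠ 0) :
    HasDerivAt (fun t : ℝ => Real.log ‖f (s + t)‖) (logDeriv f s).re 0 := by
  have hline : HasDerivAt (fun t : ℝ => s + (t : ℂ)) 1 0 :=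
    Complex.ofRealCLM.hasDerivAt.const_add s
  have hcomp : HasDerivAt (fun t : ℝ => f (s + t)) (deriv f s) 0 :=
    (hf.hasDerivAt.comp_of_eq (0 : ℝ) hline (by simp)).congr_deriv (mul_one _)
  have hlog := (hcomp.norm_sq.log (by simpa using hs)).const_mul (1 / 2)
  refine (hlog.congr_deriv ?_).congr_of_eventuallyEq (Eventually.of_forall fun t => ?_)
  · simp only [Complex.ofReal_zero, add_zero, Complex.inner, logDeriv_apply, Complex.div_re,
      Complex.sq_norm, Complex.mul_re, Complex.conj_re, Complex.conj_im]
    ring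
  · simp [Real.log_pow]

lemma re_logDeriv_le {f : ℂ → ℂ} {s : ℂ} {c δ : ℝ} (hf : DifferentiableAt ℂ f s) (hs : f s ≠ 0)
    (hδ : 0 < δ)
    (hle : ∀ t ∈ Ioo 0 δ, Real.log ‖f (s + (t : ℝ))‖ - Real.log ‖f s‖ ≤ t * c) :
    (logDeriv f s).re ≤ c := by
  refine le_of_tendsto (hasDerivAt_log_norm_add hf hs).tendsto_slope_zero_right ?_
  filter_upwards [Ioo_mem_nhdsGT hδ] with t ht
  rw [smul_eq_mul, inv_mul_le_iff₀ ht.1]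
  simpa using hle t ht

lemma differentiableAt_Gamma_of_re_pos {a : ℂ} (ha : 0 < a.re) :
    DifferentiableAt ℂ Complex.Gamma a :=
  Complex.differentiableAt_Gamma a fun m hm => by
    rw [hm, Complex.neg_re, Complex.natCast_re] at ha
    linarith [m.cast_nonneg (α := ℝ)]

lemma re_digamma_le {a : ℂ} (ha : 1 ≤ a.re) : (Complex.digamma a).re ≤ Real.log ‖a‖ + 1 :=
  re_logDeriv_le (differentiableAt_Gamma_of_re_pos (by linarith))
    (Complex.Gamma_ne_zero_of_re_pos (by linarith)) one_pos
    fun _ ht => log_norm_Gamma_add_sub_le ha ht.1.le ht.2.le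

end Gamma

section Xi

/-- A multiple of Riemann's `ξ`-function, normalised as `s (s - 1) Λ(s) / (2π)`, where `Λ` is the
completed zeta function. It is written with `riemannZeta₁` so that it has no junk value at `1`. -/
noncomputable def xi (s : ℂ) : ℂ := Complex.Gammaℝ (s + 2) * riemannZeta₁ s

lemma xi_eq_mul_completedRiemannZeta {s : ℂ} (h0 : 0 < s.re) (h1 : s ≠ 1) :
    xi s = s * (s - 1) / (2 * π) * completedRiemannZeta s := by
  have hs : s ≠ 0 := Complex.ne_zero_of_re_pos h0
  have hΓ := Complex.Gammaℝ_ne_zero_of_re_pos h0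
  rw [xi, Complex.Gammaℝ_add_two hs, riemannZeta₁_eq_sub_one_mul h1, riemannZeta_def_of_ne_zero hs]
  field_simp

lemma xi_one_sub {s : ℂ} (h0 : 0 < s.re) (h1 : s.re < 1) : xi (1 - s) = xi s := by
  have hs0 : s ≠ 0 := Complex.ne_zero_of_re_pos h0
  have hs1 : s ≠ 1 := by rintro rfl; simp at h1
  rw [xi_eq_mul_completedRiemannZeta h0 hs1,
    xi_eq_mul_completedRiemannZeta (by simpa using h1) (by simpa using hs0),
    completedRiemannZeta_one_sub]
  ring

lemma riemannZeta₁_conj (s : ℂ) :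
    riemannZeta₁ (starRingEnd ℂ s) = starRingEnd ℂ (riemannZeta₁ s) := by
  rcases eq_or_ne s 1 with rfl | h
  · simp
  · have h' : starRingEnd ℂ s ≠ 1 := by simpa using (starRingEnd ℂ).injective.ne h
    rw [riemannZeta₁_eq_sub_one_mul h, riemannZeta₁_eq_sub_one_mul h', riemannZeta_conj]
    simp

lemma Gammaℝ_conj (s : ℂ) :
    Complex.Gammaℝ (starRingEnd ℂ s) = starRingEnd ℂ (Complex.Gammaℝ s) := by
  have hπ : ((π : ℝ) : ℂ).arg ≠ π := by
    rw [Complex.arg_ofReal_of_nonneg Real.pi_pos.le]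
    exact Real.pi_ne_zero.symm
  have h2 : starRingEnd ℂ (s / 2) = starRingEnd ℂ s / 2 := by simp [Complex.conj_ofNat]
  rw [Complex.Gammaℝ_def, Complex.Gammaℝ_def, map_mul, ← Complex.Gamma_conj, h2, neg_div, neg_div,
    ← h2, ← map_neg, Complex.cpow_conj _ _ hπ, Complex.conj_ofReal]

lemma xi_conj (s : ℂ) : xi (starRingEnd ℂ s) = starRingEnd ℂ (xi s) := by
  rw [xi, xi, map_mul, ← riemannZeta₁_conj, ← Gammaℝ_conj, map_add, Complex.conj_ofNat]

lemma norm_xi_one_sub_conj {s : ℂ} (h0 : 0 < s.re) (h1 : s.re < 1) :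
    ‖xi (1 - starRingEnd ℂ s)‖ = ‖xi s‖ := by
  rw [xi_one_sub (by simpa using h0) (by simpa using h1), xi_conj, Complex.norm_conj]

lemma differentiableAt_Gammaℝ {s : ℂ} (hs : 0 < s.re) : DifferentiableAt ℂ Complex.Gammaℝ s := by
  simpa using (Complex.differentiable_Gammaℝ_inv s).fun_inv
    (inv_ne_zero (Complex.Gammaℝ_ne_zero_of_re_pos hs))

lemma differentiableAt_Gammaℝ_add_two {s : ℂ} (hs : 0 < s.re) :
    DifferentiableAt ℂ (fun z => Complex.Gammaℝ (z + 2)) s :=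
  DifferentiableAt.fun_comp' s (differentiableAt_Gammaℝ (by simp; linarith)) (by fun_prop)

lemma differentiableAt_xi {s : ℂ} (hs : 0 < s.re) : DifferentiableAt ℂ xi s :=
  (differentiableAt_Gammaℝ_add_two hs).mul (differentiable_riemannZeta₁ s)

lemma xi_ne_zero {s : ℂ} (hs : 0 < s.re) (hζ : riemannZeta₁ s ≠ 0) : xi s ≠ 0 :=
  mul_ne_zero (Complex.Gammaℝ_ne_zero_of_re_pos (by simp; linarith)) hζ

lemma norm_Gammaℝ_le_mul_norm_Gammaℝ_add {s : ℂ} (hs : 2 ≤ s.re) {k : ℝ} (hk : 0 < k) :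
    ‖Complex.Gammaℝ s‖ ≤
      π ^ (k / 2) * (1 / (k / 2) / ‖Complex.Gamma (k / 2 : ℝ)‖) * ‖Complex.Gammaℝ (s + k)‖ := by
  have hΓ := norm_Gamma_le_mul_norm_Gamma_add (a := s / 2) (by simp; linarith) (half_pos hk)
  have hpow : π ^ (-s.re / 2) = π ^ (k / 2) * π ^ (-(s.re + k) / 2) := by
    rw [← Real.rpow_add Real.pi_pos]
    ring_nf
  have hadd : s / 2 + (k / 2 : ℝ) = (s + k) / 2 := by push_cast; ring
  rw [hadd] at hΓ
  have hnorm (z : ℂ) : ‖Complex.Gammaℝ z‖ = π ^ (-z.re / 2) * ‖Complex.Gamma (z / 2)‖ := by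
    rw [Complex.Gammaℝ_def, norm_mul, Complex.norm_cpow_eq_rpow_re_of_pos Real.pi_pos]
    simp
  rw [hnorm, hnorm, Complex.add_re, Complex.ofReal_re, hpow]
  calc _ ≤ π ^ (k / 2) * π ^ (-(s.re + k) / 2) *
        (1 / (k / 2) / ‖Complex.Gamma (k / 2 : ℝ)‖ * ‖Complex.Gamma ((s + k) / 2)‖) := by gcongr
    _ = _ := by ring

lemma exists_norm_xi_div_xi_add_le {k : ℝ} (hk : 0 < k) : ∃ C : ℝ, 0 ≤ C ∧ ∀ s : ℂ, 0 ≤ s.re →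
    ‖xi s / xi (s + k)‖ ≤ C * (‖riemannZeta₁ s‖ * ‖(riemannZeta₁ (s + k))⁻¹‖) := by
  refine ⟨π ^ (k / 2) * (1 / (k / 2) / ‖Complex.Gamma (k / 2 : ℝ)‖), by positivity, fun s hs => ?_⟩
  have hΓ : 0 < ‖Complex.Gammaℝ (s + 2 + k)‖ :=
    norm_pos_iff.mpr (Complex.Gammaℝ_ne_zero_of_re_pos (by simp; linarith))
  have hle := norm_Gammaℝ_le_mul_norm_Gammaℝ_add (s := s + 2) (by simpa using hs) hk
  rw [xi, xi, add_right_comm, mul_div_mul_comm, norm_mul, norm_div, div_eq_mul_inv (riemannZeta₁ s),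
    norm_mul (riemannZeta₁ s)]
  gcongr
  exact div_le_of_le_mul₀ hΓ.le (by positivity) hle

lemma norm_riemannZeta₁_mul_norm_inv_add_le {s : ℂ} (hs : 2 ≤ s.re) {k : ℝ} (hk : 0 ≤ k) :
    ‖riemannZeta₁ s‖ * ‖(riemannZeta₁ (s + k))⁻¹‖ ≤ 7 := by
  have hre : 2 ≤ (s + k).re := by simp; linarith
  have hne {z : ℂ} (hz : 2 ≤ z.re) : z ≠ 1 := by rintro rfl; norm_num at hz
  have hle := norm_le_norm_sub_add (riemannZeta s) 1
  have hge := norm_sub_norm_le 1 (riemannZeta (s + k))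
  rw [norm_sub_rev] at hge
  rw [norm_one] at hle hge
  have hsub : ‖s - 1‖ ≤ ‖s + k - 1‖ := by
    rw [Complex.norm_def, Complex.norm_def]
    refine Real.sqrt_le_sqrt ?_
    simp only [Complex.normSq_apply, Complex.sub_re, Complex.sub_im, Complex.add_re, Complex.add_im,
      Complex.one_re, Complex.one_im, Complex.ofReal_re, Complex.ofReal_im, add_zero]
    nlinarith
  have hpos : 0 < ‖riemannZeta₁ (s + k)‖ := by linarith [quarter_le_norm_riemannZeta₁ hre]
  rw [norm_inv, ← div_eq_mul_inv, div_le_iff₀ hpos, riemannZeta₁_eq_sub_one_mul (hne hs),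
    riemannZeta₁_eq_sub_one_mul (hne hre), norm_mul, norm_mul]
  calc ‖s - 1‖ * ‖riemannZeta s‖ ≤ ‖s + k - 1‖ * (7 * ‖riemannZeta (s + k)‖) := by
        gcongr
        linarith [norm_riemannZeta_sub_one_le hs, norm_riemannZeta_sub_one_le hre]
    _ = _ := by ring

/-- The function `z ↦ ξ(z + 1/2 - h) / ξ(z + 1/2 + h)`, of modulus `1` on the imaginary axis. -/
noncomputable def xiQuotient (h : ℝ) (z : ℂ) : ℂ := xi (z + 1 / 2 - h) / xi (z + 1 / 2 + h)

lemma exists_norm_xiQuotient_le {h : ℝ} (h0 : 0 < h) (h1 : h < 1 / 2) :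
    ∃ C : ℝ, 0 ≤ C ∧ ∀ z : ℂ, 0 ≤ z.re → ‖xiQuotient h z‖ ≤
      C * (‖riemannZeta₁ (z + 1 / 2 - h)‖ * ‖(riemannZeta₁ (z + 1 / 2 + h))⁻¹‖) := by
  obtain ⟨C, hC, hle⟩ := exists_norm_xi_div_xi_add_le (mul_pos two_pos h0)
  refine ⟨C, hC, fun z hz => ?_⟩
  have hadd : z + 1 / 2 + h = z + 1 / 2 - h + (2 * h : ℝ) := by push_cast; ring
  rw [xiQuotient, hadd]
  exact hle _ (by simp; linarith)

lemma norm_riemannZeta₁_le_mul_exp {s : ℂ} {ε : ℝ} (hε : 0 < ε) (hs : ε ≤ s.re) :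
    ‖riemannZeta₁ s‖ ≤ (1 + 1 / ε) * Real.exp (2 * ‖s‖) := by
  refine (norm_riemannZeta₁_le_mul_sq hε hs).trans ?_
  gcongr
  calc (‖s‖ + 1) ^ 2 ≤ Real.exp ‖s‖ ^ 2 := by
        gcongr
        exact Real.add_one_le_exp _
    _ = Real.exp (2 * ‖s‖) := by
        rw [← Real.exp_nat_mul]
        norm_cast

lemma norm_inv_riemannZeta₁_le_exp (hζ : ∀ s : ℂ, 1 / 2 < s.re → riemannZeta₁ s ≠ 0) {s : ℂ} {h : ℝ}
    (h0 : 0 < h) (h1 : h ≤ 3 / 2) (hs : 1 / 2 + h ≤ s.re) :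
    ‖(riemannZeta₁ s)⁻¹‖ ≤ 4 * Real.exp (48 / h * (‖s‖ + 4)) := by
  refine (norm_logDeriv_riemannZeta₁_le_and_norm_inv_le hζ h0 h1 hs).2.trans ?_
  gcongr
  exact Real.sqrt_le_iff.mpr ⟨by positivity, by nlinarith [norm_nonneg s]⟩

lemma norm_add_ofReal_le_add_one (z : ℂ) {r : ℝ} (h0 : 0 ≤ r) (h1 : r ≤ 1) :
    ‖z + r‖ ≤ ‖z‖ + 1 := by
  refine (norm_add_le _ _).trans ?_
  rw [Complex.norm_real, Real.norm_of_nonneg h0]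
  gcongr

lemma xiQuotient_isBigO_exp (hζ : ∀ s : ℂ, 1 / 2 < s.re → riemannZeta₁ s ≠ 0) {h : ℝ} (h0 : 0 < h)
    (h1 : h < 1 / 2) :
    xiQuotient h =O[𝓟 {z : ℂ | 0 < z.re}] fun z => Real.exp ((2 + 48 / h) * ‖z‖) := by
  obtain ⟨C, hC, hle⟩ := exists_norm_xiQuotient_le h0 h1
  have hε : 0 < 1 / 2 - h := sub_pos.mpr h1
  refine IsBigO.of_bound
    (C * ((1 + 1 / (1 / 2 - h)) * Real.exp 2 * (4 * Real.exp (48 / h * 5))))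
    (eventually_principal.mpr fun z (hz : 0 < z.re) => (hle z hz.le).trans ?_)
  have hnum : ‖riemannZeta₁ (z + 1 / 2 - h)‖ ≤
      (1 + 1 / (1 / 2 - h)) * Real.exp (2 * (‖z‖ + 1)) := by
    refine (norm_riemannZeta₁_le_mul_exp hε (by simp; linarith)).trans ?_
    gcongr
    simpa [add_sub_assoc] using norm_add_ofReal_le_add_one z hε.le (by linarith)
  have hden : ‖(riemannZeta₁ (z + 1 / 2 + h))⁻¹‖ ≤ 4 * Real.exp (48 / h * (‖z‖ + 1 + 4)) := by
    refine (norm_inv_riemannZeta₁_le_exp hζ h0 (by linarith) (by simp; linarith)).trans ?_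
    gcongr
    simpa [add_assoc] using
      norm_add_ofReal_le_add_one z (r := 1 / 2 + h) (by positivity) (by linarith)
  calc _ ≤ C * ((1 + 1 / (1 / 2 - h)) * Real.exp (2 * (‖z‖ + 1)) *
        (4 * Real.exp (48 / h * (‖z‖ + 1 + 4)))) := by gcongr
    _ = _ := by
        rw [Real.norm_of_nonneg (Real.exp_pos _).le,
          show 2 * (‖z‖ + 1) = 2 + 2 * ‖z‖ by ring,
          show 48 / h * (‖z‖ + 1 + 4) = 48 / h * 5 + 48 / h * ‖z‖ by ring, add_mul 2,
          Real.exp_add, Real.exp_add, Real.exp_add]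
        ring

lemma norm_xiQuotient_le_one (hζ : ∀ s : ℂ, 1 / 2 < s.re → riemannZeta₁ s ≠ 0) {h : ℝ} (h0 : 0 < h)
    (h1 : h < 1 / 2) {z : ℂ} (hz : 0 ≤ z.re) : ‖xiQuotient h z‖ ≤ 1 := by
  have hne {z : ℂ} (hz : 0 ≤ z.re) : xi (z + 1 / 2 + h) ≠ 0 :=
    xi_ne_zero (by simp; linarith) (hζ _ (by simp; linarith))
  refine PhragmenLindelof.right_half_plane_of_bounded_on_real
    (DifferentiableOn.diffContOnCl fun z hz => ?_)
    ⟨1, one_lt_two, 2 + 48 / h, ?_⟩ ?_ (fun t => ?_) hz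
  · rw [Complex.closure_setOfPred_lt_re] at hz
    have hnum : DifferentiableAt ℂ (fun z : ℂ => xi (z + 1 / 2 - h)) z :=
      DifferentiableAt.fun_comp' z
        (differentiableAt_xi (by simp; linarith [show 0 ≤ z.re from hz])) (by fun_prop)
    have hden : DifferentiableAt ℂ (fun z : ℂ => xi (z + 1 / 2 + h)) z :=
      DifferentiableAt.fun_comp' z
        (differentiableAt_xi (by simp; linarith [show 0 ≤ z.re from hz])) (by fun_prop)
    exact (hnum.div hden (hne hz)).differentiableWithinAt
  · simpa only [Real.rpow_one] using (xiQuotient_isBigO_exp hζ h0 h1).mono inf_le_right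
  · obtain ⟨C, hC, hle⟩ := exists_norm_xiQuotient_le h0 h1
    refine ⟨C * 7, eventually_map.mpr ?_⟩
    filter_upwards [eventually_ge_atTop 2] with x hx
    refine (hle x (by simp; linarith)).trans ?_
    have hadd : (x : ℂ) + 1 / 2 + h = x + 1 / 2 - h + (2 * h : ℝ) := by push_cast; ring
    rw [hadd]
    gcongr
    exact norm_riemannZeta₁_mul_norm_inv_add_le (by simp; linarith) (by positivity)
  · have hreflect : (t * Complex.I + 1 / 2 - h : ℂ) =
        1 - starRingEnd ℂ (t * Complex.I + 1 / 2 + h) := by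
      simp [Complex.conj_ofNat]
      ring
    rw [xiQuotient, norm_div, hreflect, norm_xi_one_sub_conj (by simp; linarith)
      (by simp; linarith)]
    exact (div_self (norm_ne_zero_iff.mpr (hne (by simp)))).le

lemma norm_xi_le_norm_xi_add (hζ : ∀ s : ℂ, 1 / 2 < s.re → riemannZeta₁ s ≠ 0) {s : ℂ}
    (hs : 1 / 2 ≤ s.re) {k : ℝ} (hk : k ∈ Ioo 0 1) : ‖xi s‖ ≤ ‖xi (s + k)‖ := by
  have hle := norm_xiQuotient_le_one hζ (half_pos hk.1) (by linarith [hk.2])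
    (z := s + (k / 2 : ℝ) - 1 / 2) (by simp; linarith [hk.1])
  have hadd : s + k = s + (k / 2 : ℝ) + (k / 2 : ℝ) := by push_cast; ring
  have hre : 1 / 2 < (s + k).re := by simp; linarith [hk.1]
  rw [xiQuotient, sub_add_cancel, add_sub_cancel_right, ← hadd, norm_div, div_le_one
    (norm_pos_iff.mpr (xi_ne_zero (by linarith) (hζ _ hre)))] at hle
  exact hle

lemma re_logDeriv_xi_nonneg (hζ : ∀ s : ℂ, 1 / 2 < s.re → riemannZeta₁ s ≠ 0) {s : ℂ}
    (hs : 1 / 2 < s.re) : 0 ≤ (logDeriv xi s).re := by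
  have hne : xi s ≠ 0 := xi_ne_zero (by linarith) (hζ s hs)
  have hdiff : DifferentiableAt ℂ xi s := differentiableAt_xi (by linarith)
  have hinv : logDeriv (fun z => (xi z)⁻¹) s = -logDeriv xi s := by
    rw [logDeriv_apply, logDeriv_apply, deriv_fun_inv'' hdiff hne]
    field_simp
  have h := re_logDeriv_le (c := 0) (hdiff.fun_inv hne) (inv_ne_zero hne) one_pos fun t ht => ?_
  · rw [hinv, Complex.neg_re] at h
    linarith
  · simp only [norm_inv, Real.log_inv, mul_zero]
    linarith [Real.log_le_log (norm_pos_iff.mpr hne) (norm_xi_le_norm_xi_add hζ hs.le ht)]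

lemma logDeriv_Gammaℝ {s : ℂ} (hs : 0 < s.re) :
    logDeriv Complex.Gammaℝ s = -(Real.log π / 2 : ℝ) + Complex.digamma (s / 2) / 2 := by
  have hre : 0 < (s / 2).re := by simpa using hs
  have hπ : ((π : ℝ) : ℂ) ≠ 0 := Complex.ofReal_ne_zero.mpr Real.pi_ne_zero
  have hlin : HasDerivAt (fun z : ℂ => -z / 2) (-1 / 2) s := (hasDerivAt_id s).neg.div_const 2
  have hpow := hlin.const_cpow (c := (π : ℂ)) (Or.inl hπ)
  have hΓ : HasDerivAt (fun z : ℂ => Complex.Gamma (z / 2)) (deriv Complex.Gamma (s / 2) * (1 / 2))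
      s := (differentiableAt_Gamma_of_re_pos hre).hasDerivAt.comp s ((hasDerivAt_id s).div_const 2)
  have hder : HasDerivAt Complex.Gammaℝ _ s := hpow.mul hΓ
  have hne := Complex.Gamma_ne_zero_of_re_pos hre
  have : (π : ℂ) ^ (-s / 2) ≠ 0 := by simp [Complex.cpow_eq_zero_iff, hπ]
  rw [logDeriv_apply, hder.deriv, Complex.Gammaℝ_def, Complex.digamma_def, logDeriv_apply,
    Complex.ofReal_div, Complex.ofReal_log Real.pi_pos.le, Complex.ofReal_ofNat]
  field_simp

lemma logDeriv_xi {s : ℂ} (hs : 0 < s.re) (hζ : riemannZeta₁ s ≠ 0) :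
    logDeriv xi s =
      -(Real.log π / 2 : ℝ) + Complex.digamma (s / 2 + 1) / 2 + logDeriv riemannZeta₁ s := by
  have hs2 : 0 < (s + 2).re := by simp; linarith
  have hshift : logDeriv (fun z => Complex.Gammaℝ (z + 2)) s = logDeriv Complex.Gammaℝ (s + 2) := by
    rw [logDeriv_apply, logDeriv_apply, deriv_comp_add_const]
  have hmul := logDeriv_mul (f := fun z => Complex.Gammaℝ (z + 2)) s
    (Complex.Gammaℝ_ne_zero_of_re_pos hs2) hζ
    (differentiableAt_Gammaℝ_add_two hs) (differentiable_riemannZeta₁ s)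
  rw [hshift, logDeriv_Gammaℝ hs2, add_div, div_self two_ne_zero] at hmul
  exact hmul

lemma neg_half_log_le_re_logDeriv_riemannZeta₁
    (hζ : ∀ s : ℂ, 1 / 2 < s.re → riemannZeta₁ s ≠ 0) {s : ℂ} (hs : 1 / 2 < s.re) :
    -(1 / 2 * Real.log ‖s / 2 + 1‖) ≤ (logDeriv riemannZeta₁ s).re := by
  have hξ := re_logDeriv_xi_nonneg hζ hs
  have hψ := re_digamma_le (a := s / 2 + 1) (by simp; linarith)
  have hπ : 1 ≤ Real.log π := by
    rw [Real.le_log_iff_exp_le Real.pi_pos]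
    linarith [Real.exp_one_lt_d9, Real.pi_gt_d2]
  rw [logDeriv_xi (by linarith) (hζ s hs), Complex.add_re, Complex.add_re, Complex.neg_re,
    Complex.ofReal_re, Complex.div_ofNat_re] at hξ
  linarith

end Xi

section VerticalLine

variable {E : Type*} [NormedAddCommGroup E] {f : ℂ → E}

lemma norm_rpow_neg_isBigO_one_add_norm_im {a r : ℝ} (ha : 0 < a) (hr : 0 ≤ r) :
    (fun s : ℂ => ‖s‖ ^ (-r)) =O[𝓟 (Complex.re ⁻¹' Ici a)] fun s => (1 + ‖s.im‖) ^ (-r) := by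
  refine isBigO_principal.mpr ⟨(1 / a + 1) ^ r, fun s hs => ?_⟩
  have hre : a ≤ ‖s‖ := (mem_Ici.mp hs).trans (Complex.re_le_norm s)
  have hle : 1 + ‖s.im‖ ≤ (1 / a + 1) * ‖s‖ := by
    rw [add_mul, one_mul, one_div_mul_eq_div]
    gcongr
    · exact (one_le_div ha).mpr hre
    · exact Complex.abs_im_le_norm s
  have hs0 : 0 < ‖s‖ := ha.trans_le hre
  rw [Real.norm_of_nonneg (by positivity), Real.norm_of_nonneg (by positivity),
    Real.rpow_neg hs0.le, Real.rpow_neg (by positivity), ← div_eq_mul_inv,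
    le_div_iff₀ (by positivity), ← div_eq_inv_mul, div_le_iff₀ (by positivity),
    ← Real.mul_rpow (by positivity) hs0.le]
  gcongr

lemma verticalIntegrable_of_isBigO {S : Set ℂ} {σ r : ℝ} (hσ : 0 < σ) (hr : 1 < r)
    (hS : Complex.re ⁻¹' {σ} ⊆ S) (hf : ContinuousOn f S)
    (hO : f =O[𝓟 S] fun s => ‖s‖ ^ (-r)) : Complex.VerticalIntegrable f σ := by
  have hmem (t : ℝ) : (σ + t * Complex.I : ℂ) ∈ S := hS (by simp)
  obtain ⟨C, hC⟩ := isBigO_principal.mp <| (hO.mono (principal_mono.mpr hS)).trans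
    ((norm_rpow_neg_isBigO_one_add_norm_im hσ (by linarith)).mono
      (principal_mono.mpr (preimage_mono (by simp))))
  refine Integrable.mono' (g := fun t : ℝ => C * (1 + ‖t‖) ^ (-r))
    ((integrable_one_add_norm (by simpa using hr)).const_mul C)
    (hf.comp_continuous (by fun_prop) hmem).aestronglyMeasurable (.of_forall fun t => ?_)
  refine (hC (σ + t * Complex.I) (by simp)).trans_eq ?_
  rw [Real.norm_of_nonneg (by positivity)]
  simp

variable [NormedSpace ℂ E]

lemma tendsto_horizontal_integral_of_isBigO {σ₁ σ₂ r : ℝ} (h12 : σ₁ ≤ σ₂) (hr : 0 < r)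
    (hO : f =O[𝓟 (Complex.re ⁻¹' Icc σ₁ σ₂)] fun s => ‖s‖ ^ (-r)) {l : Filter ℝ} {u : ℝ → ℝ}
    (hu : Tendsto (fun T => |u T|) l atTop) :
    Tendsto (fun T => ∫ σ in σ₁..σ₂, f (σ + u T * Complex.I)) l (𝓝 0) := by
  obtain ⟨C, hC, hle⟩ := hO.exists_nonneg
  rw [isBigOWith_principal] at hle
  have hlim : Tendsto (fun T => C * |u T| ^ (-r) * |σ₂ - σ₁|) l (𝓝 0) := by
    simpa using (((tendsto_rpow_neg_atTop hr).comp hu).const_mul C).mul_const |σ₂ - σ₁|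
  refine squeeze_zero_norm' ?_ hlim
  filter_upwards [hu.eventually_gt_atTop 0] with T hT
  refine intervalIntegral.norm_integral_le_of_norm_le_const fun σ hσ => ?_
  rw [uIoc_of_le h12] at hσ
  have him : |u T| ≤ ‖(σ + u T * Complex.I : ℂ)‖ := by
    simpa using Complex.abs_im_le_norm (σ + u T * Complex.I)
  refine (hle _ (by simpa using ⟨hσ.1.le, hσ.2⟩)).trans ?_
  rw [Real.norm_of_nonneg (by positivity)]
  gcongr C * ?_
  exact Real.rpow_le_rpow_of_nonpos hT him (by linarith)

lemma integral_vertical_eq_of_isBigO {σ₁ σ₂ r : ℝ} (h1 : 0 < σ₁) (h12 : σ₁ ≤ σ₂) (hr : 1 < r)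
    (hf : DifferentiableOn ℂ f (Complex.re ⁻¹' Icc σ₁ σ₂))
    (hO : f =O[𝓟 (Complex.re ⁻¹' Icc σ₁ σ₂)] fun s => ‖s‖ ^ (-r)) :
    ∫ t : ℝ, f (σ₁ + t * Complex.I) = ∫ t : ℝ, f (σ₂ + t * Complex.I) := by
  have hrect (T : ℝ) : (∫ σ in σ₁..σ₂, f (σ + (-T : ℝ) * Complex.I))
      - (∫ σ in σ₁..σ₂, f (σ + T * Complex.I))
      + Complex.I • (∫ t in -T..T, f (σ₂ + t * Complex.I))
      - Complex.I • (∫ t in -T..T, f (σ₁ + t * Complex.I)) = 0 := by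
    have := Complex.integral_boundary_rect_eq_zero_of_differentiableOn f
      (σ₁ + (-T : ℝ) * Complex.I) (σ₂ + T * Complex.I) (hf.mono fun s hs => ?_)
    · simpa using this
    · rw [Complex.mem_reProdIm] at hs
      simpa [uIcc_of_le h12] using hs.1
  have hint {σ : ℝ} (hσ : σ ∈ Icc σ₁ σ₂) :
      Tendsto (fun T : ℝ => ∫ t in -T..T, f (σ + t * Complex.I)) atTop
        (𝓝 (∫ t : ℝ, f (σ + t * Complex.I))) :=
    intervalIntegral_tendsto_integral
      (verticalIntegrable_of_isBigO (h1.trans_le hσ.1) hr (preimage_mono (by simpa using hσ))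
        hf.continuousOn hO) tendsto_neg_atTop_atBot tendsto_id
  have hlower := tendsto_horizontal_integral_of_isBigO h12 (by linarith) hO
    (u := fun T => -T) (by simpa using tendsto_abs_atTop_atTop)
  have hupper := tendsto_horizontal_integral_of_isBigO h12 (by linarith) hO
    tendsto_abs_atTop_atTop
  have hlim := ((hlower.sub hupper).add ((hint (right_mem_Icc.mpr h12)).const_smul Complex.I)).sub
    ((hint (left_mem_Icc.mpr h12)).const_smul Complex.I)
  have hzero := tendsto_nhds_unique (hlim.congr hrect) tendsto_const_nhds
  rw [sub_zero, zero_add, ← smul_sub, smul_eq_zero, sub_eq_zero] at hzero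
  exact (hzero.resolve_left Complex.I_ne_zero).symm

lemma integral_vertical_eq_zero_of_isBigO {σ r : ℝ} (hσ : 0 < σ) (hr : 1 < r)
    (hf : DifferentiableOn ℂ f (Complex.re ⁻¹' Ici σ))
    (hO : f =O[𝓟 (Complex.re ⁻¹' Ici σ)] fun s => ‖s‖ ^ (-r)) :
    ∫ t : ℝ, f (σ + t * Complex.I) = 0 := by
  have hr0 : 0 < r := by linarith
  have hshift : ∀ᶠ τ : ℝ in atTop,
      ∫ t : ℝ, f (σ + t * Complex.I) = ∫ t : ℝ, f (τ + t * Complex.I) := by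
    filter_upwards [eventually_ge_atTop σ] with τ hτ
    have hsub : Complex.re ⁻¹' Icc σ τ ⊆ Complex.re ⁻¹' Ici σ := preimage_mono Icc_subset_Ici_self
    exact integral_vertical_eq_of_isBigO hσ hτ hr (hf.mono hsub) (hO.mono (principal_mono.mpr hsub))
  obtain ⟨C, hC⟩ := isBigO_principal.mp
    (hO.trans (norm_rpow_neg_isBigO_one_add_norm_im hσ hr0.le))
  have hlim : Tendsto (fun τ : ℝ => ∫ t : ℝ, f (τ + t * Complex.I)) atTop
      (𝓝 (∫ _ : ℝ, (0 : E))) := by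
    refine tendsto_integral_filter_of_dominated_convergence
      (fun t => C * (1 + ‖t‖) ^ (-r)) ?_ ?_
      ((integrable_one_add_norm (by simpa using hr)).const_mul C) (.of_forall fun t => ?_)
    · filter_upwards [eventually_ge_atTop σ] with τ hτ
      exact (hf.continuousOn.comp_continuous (by fun_prop) fun t => by
        simpa using hτ).aestronglyMeasurable
    · filter_upwards [eventually_ge_atTop σ] with τ hτ
      refine .of_forall fun t => (hC (τ + t * Complex.I) (by simpa using hτ)).trans_eq ?_
      rw [Real.norm_of_nonneg (by positivity)]
      simp
    · have hline : Tendsto (fun τ : ℝ => (τ + t * Complex.I : ℂ)) atTop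
          (𝓟 (Complex.re ⁻¹' Ici σ)) := by
        refine tendsto_principal.mpr ?_
        filter_upwards [eventually_ge_atTop σ] with τ hτ
        simpa using hτ
      have hnorm : Tendsto (fun τ : ℝ => ‖(τ + t * Complex.I : ℂ)‖) atTop atTop :=
        tendsto_atTop_mono (fun τ => by simpa using Complex.re_le_norm (τ + t * Complex.I))
          tendsto_id
      exact (hO.comp_tendsto hline).trans_tendsto ((tendsto_rpow_neg_atTop hr0).comp hnorm)
  rw [integral_zero] at hlim
  exact tendsto_nhds_unique (tendsto_const_nhds.congr' hshift) hlim

end VerticalLine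

section PoissonFormula

lemma id_isBigO_const_sub (b : ℂ) {ε : ℝ} (hε : 0 < ε) :
    (fun w : ℂ => w) =O[𝓟 {w | ε ≤ ‖b - w‖}] fun w => b - w := by
  refine isBigO_principal.mpr ⟨‖b‖ / ε + 1, fun w (hw : ε ≤ ‖b - w‖) => ?_⟩
  calc ‖w‖ = ‖b - (b - w)‖ := by rw [sub_sub_cancel]
    _ ≤ ‖b‖ + ‖b - w‖ := norm_sub_le _ _
    _ ≤ ‖b‖ / ε * ‖b - w‖ + ‖b - w‖ := by
        gcongr
        rw [div_mul_eq_mul_div]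
        exact (le_div_iff₀ hε).mpr (by gcongr)
    _ = _ := by ring

lemma div_mul_const_sub_isBigO {N : ℂ → ℂ} {S : Set ℂ} {b : ℂ} {ε r : ℝ} (hε : 0 < ε)
    (hS : ∀ w ∈ S, w ≠ 0 ∧ ε ≤ ‖b - w‖) (hN : N =O[𝓟 S] fun w => ‖w‖ ^ r) :
    (fun w => N w / (w * (b - w))) =O[𝓟 S] fun w => ‖w‖ ^ (-(2 - r)) := by
  have hinv : (fun w => (b - w)⁻¹) =O[𝓟 S] fun w => w⁻¹ :=
    ((id_isBigO_const_sub b hε).mono (principal_mono.mpr fun w hw => (hS w hw).2)).inv_rev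
      (eventually_principal.mpr fun w hw h => absurd h (hS w hw).1)
  refine ((hN.mul ((isBigO_refl (fun w : ℂ => w⁻¹) _).norm_right.mul hinv.norm_right)).congr'
    (.of_forall fun w => ?_) (eventually_principal.mpr fun w hw => ?_))
  · simp only [div_eq_mul_inv, mul_inv]
  · simp only [neg_sub, norm_inv]
    have hw0 : 0 < ‖w‖ := norm_pos_iff.mpr (hS w hw).1
    rw [Real.rpow_sub hw0, Real.rpow_two]
    field_simp

lemma const_isBigO_norm_rpow (c : ℂ) {a r : ℝ} (ha : 0 < a) (hr : 0 ≤ r) :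
    (fun _ : ℂ => c) =O[𝓟 (Complex.re ⁻¹' Ici a)] fun w => ‖w‖ ^ r := by
  refine isBigO_principal.mpr ⟨‖c‖ / a ^ r, fun w hw => ?_⟩
  have hre : a ≤ ‖w‖ := (mem_Ici.mp hw).trans (Complex.re_le_norm w)
  rw [Real.norm_of_nonneg (by positivity), div_mul_eq_mul_div, le_div_iff₀ (by positivity)]
  gcongr

lemma integral_vertical_inv_mul_two_mul_sub {a : ℝ} (ha : 0 < a) :
    ∫ t : ℝ, (1 : ℂ) / ((a + t * Complex.I) * ((2 * a : ℝ) - (a + t * Complex.I))) = π / a := by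
  have hsq (t : ℝ) : (1 : ℂ) / ((a + t * Complex.I) * ((2 * a : ℝ) - (a + t * Complex.I))) =
      ((a ^ 2)⁻¹ * (1 + (a⁻¹ * t) ^ 2)⁻¹ : ℝ) := by
    have hreal : (a + t * Complex.I) * ((2 * a : ℝ) - (a + t * Complex.I)) =
        (a ^ 2 * (1 + (a⁻¹ * t) ^ 2) : ℝ) := by
      have : (a : ℂ) ≠ 0 := mod_cast ha.ne'
      push_cast
      field_simp
      linear_combination -(t : ℂ) ^ 2 * Complex.I_sq
    rw [hreal, one_div, ← Complex.ofReal_inv, mul_inv]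
  simp_rw [hsq]
  rw [integral_complex_ofReal, integral_const_mul,
    Measure.integral_comp_mul_left (fun u : ℝ => (1 + u ^ 2)⁻¹) a⁻¹, integral_univ_inv_one_add_sq,
    inv_inv, abs_of_pos ha, smul_eq_mul, ← Complex.ofReal_div]
  congr 1
  field_simp

lemma differentiableOn_div_mul_const_sub {N : ℂ → ℂ} {S : Set ℂ} {b : ℂ}
    (hS : ∀ w ∈ S, w ≠ 0 ∧ w ≠ b) (hN : DifferentiableOn ℂ N S) :
    DifferentiableOn ℂ (fun w => N w / (w * (b - w))) S :=
  hN.div (by fun_prop) fun w hw => mul_ne_zero (hS w hw).1 (sub_ne_zero.mpr (hS w hw).2.symm)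

lemma ne_of_re_lt {z w : ℂ} (h : z.re < w.re) : z ≠ w := fun hzw => h.ne (congrArg _ hzw)

lemma integral_vertical_inv_mul_const_sub {b σ : ℝ} (hσ : 0 < σ) (hσb : σ < b) :
    ∫ t : ℝ, (1 : ℂ) / ((σ + t * Complex.I) * (b - (σ + t * Complex.I))) = 2 * π / b := by
  have hshift {σ₁ σ₂ : ℝ} (h1 : 0 < σ₁) (h12 : σ₁ ≤ σ₂) (h2 : σ₂ < b) :
      ∫ t : ℝ, (1 : ℂ) / ((σ₁ + t * Complex.I) * (b - (σ₁ + t * Complex.I))) =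
        ∫ t : ℝ, (1 : ℂ) / ((σ₂ + t * Complex.I) * (b - (σ₂ + t * Complex.I))) := by
    have hre (w : ℂ) (hw : w ∈ Complex.re ⁻¹' Icc σ₁ σ₂) : w ≠ 0 ∧ b - σ₂ ≤ ‖b - w‖ :=
      ⟨Complex.ne_zero_of_re_pos (h1.trans_le hw.1),
        (sub_le_sub_left hw.2 b).trans (Complex.re_le_norm (b - w))⟩
    refine integral_vertical_eq_of_isBigO (r := 2 - 0)
      (f := fun w => (1 : ℂ) / (w * (b - w))) h1 h12 (by norm_num)
      (differentiableOn_div_mul_const_sub (fun w hw => ⟨(hre w hw).1, ?_⟩)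
        (differentiableOn_const 1))
      (div_mul_const_sub_isBigO (sub_pos.mpr h2) hre ((const_isBigO_norm_rpow 1 h1 le_rfl).mono ?_))
    · exact ne_of_re_lt (hw.2.trans_lt (by simpa using h2))
    · exact principal_mono.mpr (preimage_mono Icc_subset_Ici_self)
  have hb : 0 < b := hσ.trans hσb
  have hmid := integral_vertical_inv_mul_two_mul_sub (half_pos hb)
  rw [mul_div_cancel₀ b two_ne_zero, Complex.ofReal_div, Complex.ofReal_ofNat,
    div_div_eq_mul_div, mul_comm (π : ℂ)] at hmid
  rcases le_total σ (b / 2) with h | h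
  · rw [hshift hσ h (half_lt_self hb)]
    simpa using hmid
  · rw [← hshift (half_pos hb) h hσb]
    simpa using hmid

lemma dslope_div_eq {N : ℂ → ℂ} {b w : ℂ} (hw : w ≠ b) :
    dslope N b w / w = (N b - N w) / (w * (b - w)) := by
  rw [dslope_of_ne _ hw, slope_comm, slope_def_field, div_div, mul_comm w]

lemma differentiableOn_dslope_div {N : ℂ → ℂ} {b σ : ℝ} (hσ : 0 < σ) (hσb : σ < b)
    (hN : DifferentiableOn ℂ N (Complex.re ⁻¹' Ici σ)) :
    DifferentiableOn ℂ (fun w => dslope N b w / w) (Complex.re ⁻¹' Ici σ) := by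
  have hnhds : Complex.re ⁻¹' Ici σ ∈ 𝓝 (b : ℂ) :=
    Complex.continuous_re.continuousAt.preimage_mem_nhds (Ici_mem_nhds (by simpa using hσb))
  exact ((Complex.differentiableOn_dslope hnhds).mpr hN).div differentiableOn_id
    fun w hw => Complex.ne_zero_of_re_pos (hσ.trans_le hw)

lemma dslope_div_isBigO {N : ℂ → ℂ} {b σ r : ℝ} (hσ : 0 < σ) (hσb : σ < b) (hr : 0 ≤ r)
    (hN : DifferentiableOn ℂ N (Complex.re ⁻¹' Ici σ))
    (hO : N =O[𝓟 (Complex.re ⁻¹' Ici σ)] fun w => ‖w‖ ^ r) :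
    (fun w => dslope N b w / w) =O[𝓟 (Complex.re ⁻¹' Ici σ)] fun w => ‖w‖ ^ (-(2 - r)) := by
  have hne (w : ℂ) (hw : w ∈ Complex.re ⁻¹' Ici σ) : w ≠ 0 :=
    Complex.ne_zero_of_re_pos (hσ.trans_le hw)
  set K := Metric.closedBall (b : ℂ) 1 ∩ Complex.re ⁻¹' Ici σ
  set S := {w : ℂ | 1 ≤ ‖(b : ℂ) - w‖} ∩ Complex.re ⁻¹' Ici σ
  have hcover : Complex.re ⁻¹' Ici σ ⊆ K ∪ S := fun w hw => by
    rcases le_total ‖(b : ℂ) - w‖ 1 with h | h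
    · exact Or.inl ⟨by rwa [mem_closedBall_iff_norm'], hw⟩
    · exact Or.inr ⟨h, hw⟩
  have hK : (fun w => dslope N b w / w) =O[𝓟 K] fun w => ‖w‖ ^ (-(2 - r)) := by
    have hcpt : IsCompact K :=
      (isCompact_closedBall _ _).inter_right (isClosed_Ici.preimage Complex.continuous_re)
    have hpow : ContinuousOn (fun w : ℂ => ‖w‖ ^ (-(2 - r))) K :=
      continuous_norm.continuousOn.rpow_const fun w hw => Or.inl (norm_ne_zero_iff.mpr (hne w hw.2))
    refine (((differentiableOn_dslope_div hσ hσb hN).continuousOn.mono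
      inter_subset_right).isBigO_principal hcpt (c := (1 : ℝ)) (by simp)).trans
      (hpow.isBigO_rev_principal hcpt (fun w hw => ?_) 1)
    exact (Real.rpow_pos_of_pos (norm_pos_iff.mpr (hne w hw.2)) _).ne'
  have hS : (fun w => dslope N b w / w) =O[𝓟 S] fun w => ‖w‖ ^ (-(2 - r)) := by
    refine (div_mul_const_sub_isBigO one_pos (fun w hw => ⟨hne w hw.2, hw.1⟩)
      (((const_isBigO_norm_rpow (N b) hσ hr).sub hO).mono
        (principal_mono.mpr inter_subset_right))).congr'
      (eventually_principal.mpr fun w hw => (dslope_div_eq ?_).symm) .rfl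
    rintro rfl
    norm_num [S] at hw
  exact (hK.sup hS).mono (by simpa using hcover)

lemma verticalIntegrable_div_mul_const_sub {N : ℂ → ℂ} {b σ r : ℝ} (hσ : 0 < σ) (hσb : σ < b)
    (hr : r < 1) (hN : DifferentiableOn ℂ N (Complex.re ⁻¹' Ici σ))
    (hO : N =O[𝓟 (Complex.re ⁻¹' Ici σ)] fun w => ‖w‖ ^ r) :
    Complex.VerticalIntegrable (fun w => N w / (w * (b - w))) σ := by
  have hsub : Complex.re ⁻¹' {σ} ⊆ Complex.re ⁻¹' Ici σ := preimage_mono (by simp)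
  have hre (w : ℂ) (hw : w ∈ Complex.re ⁻¹' {σ}) : w ≠ 0 ∧ b - σ ≤ ‖b - w‖ :=
    ⟨Complex.ne_zero_of_re_pos (hσ.trans_eq hw.symm),
      le_of_eq_of_le (by simp [mem_singleton_iff.mp hw]) (Complex.re_le_norm (b - w))⟩
  refine verticalIntegrable_of_isBigO hσ (r := 2 - r) (by linarith) subset_rfl
    (differentiableOn_div_mul_const_sub (fun w hw => ⟨(hre w hw).1, ?_⟩)
      (hN.mono hsub)).continuousOn
    (div_mul_const_sub_isBigO (sub_pos.mpr hσb) hre (hO.mono (principal_mono.mpr hsub)))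
  exact ne_of_re_lt ((mem_singleton_iff.mp hw).trans_lt (by simpa using hσb))

lemma integral_vertical_div_mul_const_sub {N : ℂ → ℂ} {b σ r : ℝ} (hσ : 0 < σ) (hσb : σ < b)
    (hr0 : 0 ≤ r) (hr : r < 1) (hN : DifferentiableOn ℂ N (Complex.re ⁻¹' Ici σ))
    (hO : N =O[𝓟 (Complex.re ⁻¹' Ici σ)] fun w => ‖w‖ ^ r) :
    ∫ t : ℝ, N (σ + t * Complex.I) / ((σ + t * Complex.I) * (b - (σ + t * Complex.I))) =
      2 * π / b * N b := by
  have hker := verticalIntegrable_div_mul_const_sub (N := fun _ => 1) hσ hσb hr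
    (differentiableOn_const 1) (const_isBigO_norm_rpow 1 hσ hr0)
  have hslope_diff := differentiableOn_dslope_div hσ hσb hN
  have hslope_isBigO := dslope_div_isBigO hσ hσb hr0 hN hO
  have hslope := verticalIntegrable_of_isBigO hσ (r := 2 - r) (by linarith)
    (preimage_mono (by simp)) hslope_diff.continuousOn hslope_isBigO
  have hsplit (t : ℝ) :
      N (σ + t * Complex.I) / ((σ + t * Complex.I) * (b - (σ + t * Complex.I))) =
        N b * (1 / ((σ + t * Complex.I) * (b - (σ + t * Complex.I)))) -
          dslope N b (σ + t * Complex.I) / (σ + t * Complex.I) := by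
    rw [dslope_div_eq (ne_of_re_lt (by simpa using hσb))]
    ring
  simp_rw [hsplit]
  rw [integral_sub (hker.const_mul _) hslope, integral_const_mul,
    integral_vertical_inv_mul_const_sub hσ hσb,
    integral_vertical_eq_zero_of_isBigO (f := fun w => dslope N b w / w) hσ (r := 2 - r)
      (by linarith) hslope_diff hslope_isBigO, sub_zero, mul_comm]

end PoissonFormula

section PerronKernel

/-- The kernel `x ^ s / (s * (s + 1))` of the Perron formula for the once-integrated summatory
function of a Dirichlet series, divided by `x`. -/
noncomputable def perronKernel (x : ℝ) (s : ℂ) : ℂ := (x : ℂ) ^ s / (s * (s + 1))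

lemma norm_le_norm_add_one {s : ℂ} (hs : 0 ≤ s.re) : ‖s‖ ≤ ‖s + 1‖ := by
  rw [← sq_le_sq₀ (norm_nonneg _) (norm_nonneg _), Complex.sq_norm, Complex.sq_norm,
    Complex.normSq_apply, Complex.normSq_apply]
  simp only [Complex.add_re, Complex.one_re, Complex.add_im, Complex.one_im]
  nlinarith

lemma norm_perronKernel_le {x : ℝ} (hx : 0 < x) {s : ℂ} (hs : 0 < s.re) :
    ‖perronKernel x s‖ ≤ x ^ s.re / ‖s‖ ^ 2 := by
  have : 0 < ‖s‖ := hs.trans_le (Complex.re_le_norm s)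
  rw [perronKernel, norm_div, norm_mul, Complex.norm_cpow_eq_rpow_re_of_pos hx, sq]
  gcongr
  exact norm_le_norm_add_one hs.le

lemma differentiableOn_perronKernel {x : ℝ} (hx : x ≠ 0) :
    DifferentiableOn ℂ (perronKernel x) (Complex.re ⁻¹' Ioi 0) := fun s (hs : 0 < s.re) => by
  have h0 : s ≠ 0 := Complex.ne_zero_of_re_pos hs
  have h1 : s + 1 ≠ 0 := Complex.ne_zero_of_re_pos (by simpa using hs.trans (lt_add_one _))
  have hpow : DifferentiableAt ℂ (fun s => (x : ℂ) ^ s) s :=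
    differentiableAt_id.const_cpow (.inl (mod_cast hx))
  have hden : DifferentiableAt ℂ (fun s : ℂ => s * (s + 1)) s := by fun_prop
  exact (hpow.div hden (mul_ne_zero h0 h1)).differentiableWithinAt

lemma perronKernel_isBigO {x σ₁ σ₂ : ℝ} (hx : 0 < x) (hσ : 0 < σ₁) :
    perronKernel x =O[𝓟 (Complex.re ⁻¹' Icc σ₁ σ₂)] fun s => ‖s‖ ^ (-2 : ℝ) := by
  obtain ⟨C, hC⟩ := isCompact_Icc.exists_bound_of_continuousOn (s := Icc σ₁ σ₂)
    (Real.continuous_const_rpow hx.ne').continuousOn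
  refine isBigO_principal.mpr ⟨C, fun s hs => ?_⟩
  refine (norm_perronKernel_le hx (hσ.trans_le hs.1)).trans ?_
  rw [Real.norm_of_nonneg (by positivity), Real.rpow_neg (by positivity), Real.rpow_two,
    ← div_eq_mul_inv]
  gcongr
  exact (le_abs_self _).trans (hC _ hs)

lemma mul_perronKernel_isBigO {D : ℂ → ℂ} {x σ₁ σ₂ r : ℝ} (hx : 0 < x) (hσ : 0 < σ₁)
    (hD : D =O[𝓟 (Complex.re ⁻¹' Icc σ₁ σ₂)] fun s => ‖s‖ ^ r) :
    (fun s => D s * perronKernel x s) =O[𝓟 (Complex.re ⁻¹' Icc σ₁ σ₂)]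
      fun s => ‖s‖ ^ (-(2 - r)) := by
  refine (hD.mul (perronKernel_isBigO hx hσ)).congr' .rfl (eventually_principal.mpr fun s hs => ?_)
  have hs0 : 0 < ‖s‖ := (hσ.trans_le hs.1).trans_le (Complex.re_le_norm s)
  simp only [← Real.rpow_add hs0]
  ring_nf

lemma verticalIntegrable_mul_perronKernel {D : ℂ → ℂ} {x σ r : ℝ} (hx : 0 < x) (hσ : 0 < σ)
    (hr : r < 1) (hD : ContinuousOn D (Complex.re ⁻¹' {σ}))
    (hO : D =O[𝓟 (Complex.re ⁻¹' {σ})] fun s => ‖s‖ ^ r) :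
    Complex.VerticalIntegrable (fun s => D s * perronKernel x s) σ := by
  refine verticalIntegrable_of_isBigO hσ (r := 2 - r) (by linarith) subset_rfl
    (hD.mul ((differentiableOn_perronKernel hx.ne').continuousOn.mono ?_)) ?_
  · exact preimage_mono (singleton_subset_iff.mpr hσ)
  · rw [← Icc_self] at hO ⊢
    exact mul_perronKernel_isBigO hx hσ hO

lemma conj_perronKernel {x : ℝ} (hx : 0 ≤ x) (s : ℂ) :
    starRingEnd ℂ (perronKernel x s) = perronKernel x (starRingEnd ℂ s) := by
  have harg : (x : ℂ).arg ≠ π := by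
    rw [Complex.arg_ofReal_of_nonneg hx]
    exact Real.pi_ne_zero.symm
  rw [perronKernel, perronKernel, Complex.cpow_conj _ _ harg, Complex.conj_ofReal]
  simp only [map_div₀, map_mul, map_add, map_one]

lemma conj_vertical (σ t : ℝ) :
    starRingEnd ℂ (σ + t * Complex.I) = 2 * σ - (σ + t * Complex.I) := by
  simp only [map_add, map_mul, Complex.conj_ofReal, Complex.conj_I]
  ring

lemma norm_integral_mul_perronKernel_le {N : ℂ → ℂ} {g : ℝ → ℂ} {x σ r : ℝ} (hx : 0 < x)
    (hσ : 0 < σ) (hr0 : 0 ≤ r) (hr : r < 1) (hN : DifferentiableOn ℂ N (Complex.re ⁻¹' Ici σ))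
    (hO : N =O[𝓟 (Complex.re ⁻¹' Ici σ)] fun w => ‖w‖ ^ r)
    (hg : ∀ t : ℝ, ‖g t‖ ≤ (N (σ + t * Complex.I)).re) :
    ‖∫ t : ℝ, g t * perronKernel x (σ + t * Complex.I)‖ ≤
      x ^ σ * (π / σ * (N (2 * σ)).re) := by
  have hσ2 : σ < 2 * σ := by linarith
  have hint := verticalIntegrable_div_mul_const_sub hσ hσ2 hr hN hO
  have hpoisson : ∫ t : ℝ, (N (σ + t * Complex.I) /
      ((σ + t * Complex.I) * ((2 * σ : ℝ) - (σ + t * Complex.I)))).re =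
        π / σ * (N (2 * σ)).re := by
    have h := Complex.reCLM.integral_comp_comm hint
    simp only [Complex.reCLM_apply] at h
    rw [h, integral_vertical_div_mul_const_sub hσ hσ2 hr0 hr hN hO,
      show (2 * π / (2 * σ : ℝ) : ℂ) = (π / σ : ℝ) by push_cast; field_simp,
      Complex.re_ofReal_mul, Complex.ofReal_mul, Complex.ofReal_ofNat]
  rw [← hpoisson, ← integral_const_mul]
  refine norm_integral_le_of_norm_le (hint.re.const_mul _) (.of_forall fun t => ?_)
  set w : ℂ := σ + t * Complex.I
  have hre : w.re = σ := by simp [w]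
  have hnormSq : w * ((2 * σ : ℝ) - w) = (‖w‖ ^ 2 : ℝ) := by
    rw [Complex.ofReal_mul, Complex.ofReal_ofNat, ← conj_vertical, Complex.mul_conj,
      Complex.normSq_eq_norm_sq]
  rw [hnormSq, Complex.div_ofReal_re, norm_mul]
  calc ‖g t‖ * ‖perronKernel x w‖ ≤ (N w).re * (x ^ w.re / ‖w‖ ^ 2) := by
        gcongr
        · exact (norm_nonneg _).trans (hg t)
        · exact hg t
        · exact norm_perronKernel_le hx (hσ.trans_eq hre.symm)
    _ = x ^ σ * ((N w).re / ‖w‖ ^ 2) := by rw [hre]; ring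

lemma perronKernel_const_sub {x : ℝ} (hx : x ≠ 0) {b w : ℂ} (hw : w ≠ 0) (hwb : w ≠ b)
    (hwb1 : w ≠ b + 1) :
    perronKernel x (b - w) = (x : ℂ) ^ b * (b * ((x : ℂ) ^ (-w) / (w * (b - w))) -
      (b + 1) * ((x : ℂ) ^ (-w) / (w * (b + 1 - w)))) := by
  have hb : b - w ≠ 0 := sub_ne_zero.mpr hwb.symm
  have hb1 : b + 1 - w ≠ 0 := sub_ne_zero.mpr hwb1.symm
  have hb1' : b - w + 1 ≠ 0 := by rwa [sub_add_eq_add_sub]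
  rw [perronKernel, sub_eq_add_neg b w, Complex.cpow_add _ _ (mod_cast hx), ← sub_eq_add_neg]
  field_simp
  ring

lemma mul_cpow_neg_isBigO {D : ℂ → ℂ} {x σ r : ℝ} (hx : 1 ≤ x) (hσ : 0 ≤ σ)
    (hO : D =O[𝓟 (Complex.re ⁻¹' Ici σ)] fun w => ‖w‖ ^ r) :
    (fun w => D w * (x : ℂ) ^ (-w)) =O[𝓟 (Complex.re ⁻¹' Ici σ)] fun w => ‖w‖ ^ r := by
  refine (IsBigO.of_bound 1 (eventually_principal.mpr fun w hw => ?_)).trans hO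
  have hwre : 0 ≤ w.re := hσ.trans hw
  rw [norm_mul, Complex.norm_cpow_eq_rpow_re_of_pos (by linarith), one_mul]
  exact mul_le_of_le_one_right (norm_nonneg _)
    (Real.rpow_le_one_of_one_le_of_nonpos hx (by simpa using hwre))

lemma integral_vertical_mul_perronKernel_const_sub {D : ℂ → ℂ} {x b σ r : ℝ} (hx : 1 ≤ x)
    (hσ : 0 < σ) (hσb : σ < b) (hr0 : 0 ≤ r) (hr : r < 1)
    (hD : DifferentiableOn ℂ D (Complex.re ⁻¹' Ici σ))
    (hO : D =O[𝓟 (Complex.re ⁻¹' Ici σ)] fun w => ‖w‖ ^ r) :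
    ∫ t : ℝ, D (σ + t * Complex.I) * perronKernel x (b - (σ + t * Complex.I)) =
      2 * π * (D b - D (b + 1) / x) := by
  have hx0 : x ≠ 0 := (zero_lt_one.trans_le hx).ne'
  have hxc : (x : ℂ) ≠ 0 := mod_cast hx0
  have hb : (b : ℂ) ≠ 0 := mod_cast (hσ.trans hσb).ne'
  have hb1 : (b + 1 : ℂ) ≠ 0 := mod_cast (by linarith : b + 1 ≠ 0)
  set N : ℂ → ℂ := fun w => D w * (x : ℂ) ^ (-w)
  have hN : DifferentiableOn ℂ N (Complex.re ⁻¹' Ici σ) :=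
    hD.mul (differentiableOn_id.neg.const_cpow (.inl hxc))
  have hNO := mul_cpow_neg_isBigO hx hσ.le hO
  have hσb1 : σ < b + 1 := by linarith
  have hint := verticalIntegrable_div_mul_const_sub hσ hσb hr hN hNO
  have hint1 := verticalIntegrable_div_mul_const_sub hσ hσb1 hr hN hNO
  have hpoisson := integral_vertical_div_mul_const_sub hσ hσb hr0 hr hN hNO
  have hpoisson1 := integral_vertical_div_mul_const_sub hσ hσb1 hr0 hr hN hNO
  rw [Complex.ofReal_add, Complex.ofReal_one] at hint1 hpoisson1
  have hsplit (t : ℝ) :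
      D (σ + t * Complex.I) * perronKernel x (b - (σ + t * Complex.I)) =
        (x : ℂ) ^ (b : ℂ) * (b * (N (σ + t * Complex.I) /
          ((σ + t * Complex.I) * (b - (σ + t * Complex.I)))) -
          (b + 1) * (N (σ + t * Complex.I) /
          ((σ + t * Complex.I) * (b + 1 - (σ + t * Complex.I))))) := by
    rw [perronKernel_const_sub hx0 (Complex.ne_zero_of_re_pos (by simpa using hσ))
      (ne_of_re_lt (by simpa using hσb)) (ne_of_re_lt (by simpa using hσb1))]
    ring
  simp_rw [hsplit]
  rw [integral_const_mul, integral_sub (hint.const_mul _) (hint1.const_mul _), integral_const_mul,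
    integral_const_mul, hpoisson, hpoisson1]
  have hpow : (x : ℂ) ^ (b : ℂ) ≠ 0 := (Complex.cpow_ne_zero_iff_of_exponent_ne_zero hb).mpr hxc
  simp only [N, Complex.cpow_neg, Complex.cpow_add _ _ hxc, Complex.cpow_one]
  field_simp

/-- On the line `re s = σ` conjugation is `s ↦ 2 * σ - s`, which makes the integrand the
conjugate of a function holomorphic to the right of the line. -/
lemma integral_conj_mul_perronKernel {D : ℂ → ℂ} {x σ r : ℝ} (hx : 1 ≤ x) (hσ : 0 < σ)
    (hr0 : 0 ≤ r) (hr : r < 1) (hD : DifferentiableOn ℂ D (Complex.re ⁻¹' Ici σ))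
    (hO : D =O[𝓟 (Complex.re ⁻¹' Ici σ)] fun w => ‖w‖ ^ r) :
    ∫ t : ℝ, starRingEnd ℂ (D (σ + t * Complex.I)) * perronKernel x (σ + t * Complex.I) =
      2 * π * starRingEnd ℂ (D (2 * σ) - D (2 * σ + 1) / x) := by
  have h := congrArg (starRingEnd ℂ) (integral_vertical_mul_perronKernel_const_sub hx hσ
    (b := 2 * σ) (by linarith) hr0 hr hD hO)
  rw [← integral_conj] at h
  simp only [map_mul, conj_perronKernel (zero_le_one.trans hx)] at h
  simpa [← conj_vertical, map_ofNat] using h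

lemma norm_integral_mul_perronKernel_le_of_norm_add_conj_le {D N : ℂ → ℂ} {x σ r : ℝ} (hx : 1 ≤ x)
    (hσ : 0 < σ) (hr0 : 0 ≤ r) (hr : r < 1)
    (hD : DifferentiableOn ℂ D (Complex.re ⁻¹' Ici σ))
    (hDO : D =O[𝓟 (Complex.re ⁻¹' Ici σ)] fun w => ‖w‖ ^ r)
    (hN : DifferentiableOn ℂ N (Complex.re ⁻¹' Ici σ))
    (hNO : N =O[𝓟 (Complex.re ⁻¹' Ici σ)] fun w => ‖w‖ ^ r)
    (h : ∀ s : ℂ, s.re = σ → ‖D s + starRingEnd ℂ (D s)‖ ≤ (N s).re) :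
    ‖∫ t : ℝ, D (σ + t * Complex.I) * perronKernel x (σ + t * Complex.I)‖ ≤
      x ^ σ * (π / σ * (N (2 * σ)).re) + 2 * π * (‖D (2 * σ)‖ + ‖D (2 * σ + 1)‖ / x) := by
  have hx0 : 0 < x := by linarith
  have hsub : Complex.re ⁻¹' {σ} ⊆ Complex.re ⁻¹' Ici σ := preimage_mono (by simp)
  have hcont := hD.continuousOn.mono hsub
  have hline := hDO.mono (principal_mono.mpr hsub)
  have hint := verticalIntegrable_mul_perronKernel hx0 hσ hr hcont hline
  have hint' := verticalIntegrable_mul_perronKernel (D := fun s => starRingEnd ℂ (D s)) hx0 hσ hr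
    (Complex.continuous_conj.comp_continuousOn hcont)
    (.of_norm_left (by simpa using hline.norm_left))
  have hsum := norm_integral_mul_perronKernel_le hx0 hσ hr0 hr hN hNO
    (g := fun t => D (σ + t * Complex.I) + starRingEnd ℂ (D (σ + t * Complex.I)))
    fun t => h _ (by simp)
  simp only [add_mul] at hsum
  rw [integral_add hint hint', integral_conj_mul_perronKernel hx hσ hr0 hr hD hDO] at hsum
  have hdiff : ‖2 * π * starRingEnd ℂ (D (2 * σ) - D (2 * σ + 1) / x)‖ ≤
      2 * π * (‖D (2 * σ)‖ + ‖D (2 * σ + 1)‖ / x) := by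
    rw [norm_mul, RCLike.norm_conj, norm_mul, Complex.norm_ofNat, Complex.norm_real,
      Real.norm_of_nonneg Real.pi_pos.le]
    gcongr
    refine (norm_sub_le _ _).trans_eq ?_
    rw [norm_div, Complex.norm_real, Real.norm_of_nonneg hx0.le]
  exact (norm_le_add_norm_add _ _).trans (add_le_add hsum hdiff)

end PerronKernel

section ExplicitFormula

lemma differentiableOn_logDeriv_riemannZeta₁
    (hζ : ∀ s : ℂ, 1 / 2 < s.re → riemannZeta₁ s ≠ 0) :
    DifferentiableOn ℂ (logDeriv riemannZeta₁) (Complex.re ⁻¹' Ioi (1 / 2)) :=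
  (differentiable_riemannZeta₁.differentiableOn.deriv
    (isOpen_Ioi.preimage Complex.continuous_re)).div
    differentiable_riemannZeta₁.differentiableOn hζ

lemma logDeriv_riemannZeta₁_isBigO (hζ : ∀ s : ℂ, 1 / 2 < s.re → riemannZeta₁ s ≠ 0) {σ : ℝ}
    (hσ : 1 / 2 < σ) :
    logDeriv riemannZeta₁ =O[𝓟 (Complex.re ⁻¹' Ici σ)] fun s => ‖s‖ ^ (1 / 2 : ℝ) := by
  set h := min (σ - 1 / 2) (3 / 2)
  have hpos : 0 < h := lt_min (by linarith) (by norm_num)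
  refine isBigO_principal.mpr ⟨192 / h ^ 2 * 3, fun s (hs : σ ≤ s.re) => ?_⟩
  have hle : 1 / 2 + h ≤ s.re := by linarith [min_le_left (σ - 1 / 2) (3 / 2)]
  refine (norm_logDeriv_riemannZeta₁_le_and_norm_inv_le hζ hpos (min_le_right _ _) hle).1.trans ?_
  rw [Real.norm_of_nonneg (by positivity), ← Real.sqrt_eq_rpow, mul_assoc]
  have hre := Complex.re_le_norm s
  gcongr
  refine Real.sqrt_le_iff.mpr ⟨by positivity, ?_⟩
  rw [mul_pow, Real.sq_sqrt (norm_nonneg s)]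
  linarith

lemma one_le_norm_half_add_one {s : ℂ} (hs : 0 ≤ s.re) : 1 ≤ ‖s / 2 + 1‖ := by
  refine le_trans ?_ (Complex.re_le_norm _)
  rw [Complex.add_re, Complex.one_re, Complex.div_ofNat_re]
  linarith

lemma log_half_add_one_isBigO {σ r : ℝ} (hσ : 0 < σ) (hr : 0 < r) :
    (fun s : ℂ => Complex.log (s / 2 + 1)) =O[𝓟 (Complex.re ⁻¹' Ici σ)] fun s => ‖s‖ ^ r := by
  have hlog : (fun s : ℂ => (Real.log ‖s / 2 + 1‖ : ℂ)) =O[𝓟 (Complex.re ⁻¹' Ici σ)]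
      fun s => ‖s‖ ^ r := by
    have hlin : (fun s : ℂ => ‖s / 2 + 1‖) =O[𝓟 (Complex.re ⁻¹' Ici σ)] fun s => ‖s‖ := by
      refine .norm_norm (.add (.of_bound 1 (.of_forall fun s => ?_)) (.of_norm_right ?_))
      · simp [half_le_self (norm_nonneg s)]
      · simpa using const_isBigO_norm_rpow 1 hσ zero_le_one
    refine (IsBigO.of_bound (1 / r) (eventually_principal.mpr fun s hs => ?_)).trans
      (hlin.rpow hr.le (.of_forall fun s => norm_nonneg s))
    rw [Complex.norm_real,
      Real.norm_of_nonneg (Real.log_nonneg (one_le_norm_half_add_one (hσ.le.trans hs))),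
      Real.norm_of_nonneg (by positivity), one_div_mul_eq_div]
    exact Real.log_le_rpow_div (norm_nonneg _) hr
  have harg : (fun s : ℂ => (s / 2 + 1).arg * Complex.I) =O[𝓟 (Complex.re ⁻¹' Ici σ)]
      fun s => ‖s‖ ^ r := by
    refine (IsBigO.of_bound 1 (.of_forall fun s => ?_)).trans (const_isBigO_norm_rpow π hσ hr.le)
    simpa [abs_of_pos Real.pi_pos] using Complex.abs_arg_le_pi (s / 2 + 1)
  exact hlog.add harg

lemma differentiableOn_log_half_add_one :
    DifferentiableOn ℂ (fun s : ℂ => Complex.log (s / 2 + 1)) (Complex.re ⁻¹' Ioi 0) :=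
  fun s (hs : 0 < s.re) => by
    refine (DifferentiableAt.clog (by fun_prop) (.inl ?_)).differentiableWithinAt
    rw [Complex.add_re, Complex.one_re, Complex.div_ofNat_re]
    positivity

lemma psi₁Error_eq_integral_of_one_lt (hζ : ∀ s : ℂ, 1 / 2 < s.re → riemannZeta₁ s ≠ 0)
    {x σ : ℝ} (hx : 0 < x) (hσ : 1 < σ) :
    (psi₁Error x : ℂ) = -(x / (2 * π)) *
      ∫ t : ℝ, logDeriv riemannZeta₁ (σ + t * Complex.I) * perronKernel x (σ + t * Complex.I) := by
  have hσ0 : 0 < σ := by linarith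
  have hline (t : ℝ) : (-σ - 1 : ℝ) + t * Complex.I = -(σ + (-t : ℝ) * Complex.I) - 1 := by
    push_cast
    ring
  have hmellin {y : ℝ} (hy : 0 < y) (t : ℝ) :
      (y : ℂ) ^ (-((-σ - 1 : ℝ) + t * Complex.I)) •
          mellin (fun x => (psi₁Error x : ℂ)) ((-σ - 1 : ℝ) + t * Complex.I) =
        -(y * (logDeriv riemannZeta₁ (σ + (-t : ℝ) * Complex.I) *
          perronKernel y (σ + (-t : ℝ) * Complex.I))) := by
    rw [hline, mellin_psi₁Error (by simpa using hσ), neg_sub, sub_neg_eq_add,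
      Complex.cpow_add _ _ (mod_cast hy.ne'), Complex.cpow_one, perronKernel, smul_eq_mul]
    ring
  have hint : Complex.VerticalIntegrable (mellin fun x => (psi₁Error x : ℂ)) (-σ - 1) := by
    have hsub : Complex.re ⁻¹' {σ} ⊆ Complex.re ⁻¹' Ici σ := preimage_mono (by simp)
    have h := verticalIntegrable_mul_perronKernel one_pos hσ0 (by norm_num)
      ((differentiableOn_logDeriv_riemannZeta₁ hζ).continuousOn.mono
        (preimage_mono (singleton_subset_iff.mpr (mem_Ioi.mpr (by linarith)))))
      ((logDeriv_riemannZeta₁_isBigO hζ (by linarith)).mono (principal_mono.mpr hsub))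
    refine (h.comp_neg.neg).congr (.of_forall fun t => ?_)
    simpa using (hmellin one_pos t).symm
  have hconv : MellinConvergent (fun x => (psi₁Error x : ℂ)) (-σ - 1 : ℝ) := by
    simpa using mellinConvergent_psi₁Error psi₁Error_isBigO_sq (s := σ) (by simp; linarith)
  rw [← mellinInv_mellin_eq (-σ - 1) (fun x => (psi₁Error x : ℂ)) hx hconv hint
    (Complex.continuous_ofReal.comp continuous_psi₁Error).continuousAt, mellinInv]
  simp_rw [hmellin hx]
  rw [integral_neg, integral_const_mul, integral_neg_eq_self fun t : ℝ =>
    logDeriv riemannZeta₁ (σ + t * Complex.I) * perronKernel x (σ + t * Complex.I),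
    Complex.real_smul]
  push_cast
  ring

lemma psi₁Error_eq_integral (hζ : ∀ s : ℂ, 1 / 2 < s.re → riemannZeta₁ s ≠ 0)
    {x σ : ℝ} (hx : 0 < x) (hσ : 1 / 2 < σ) :
    (psi₁Error x : ℂ) = -(x / (2 * π)) *
      ∫ t : ℝ, logDeriv riemannZeta₁ (σ + t * Complex.I) * perronKernel x (σ + t * Complex.I) := by
  have hσ0 : 0 < σ := by linarith
  rw [psi₁Error_eq_integral_of_one_lt hζ hx (σ := σ + 1) (by linarith)]
  congr 1
  refine (integral_vertical_eq_of_isBigO (r := 2 - 1 / 2)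
    (f := fun s => logDeriv riemannZeta₁ s * perronKernel x s) hσ0 (by linarith) (by norm_num)
    (((differentiableOn_logDeriv_riemannZeta₁ hζ).mono ?_).mul
      ((differentiableOn_perronKernel hx.ne').mono ?_))
    (mul_perronKernel_isBigO hx hσ0 ((logDeriv_riemannZeta₁_isBigO hζ hσ).mono ?_))).symm
  · exact preimage_mono fun y hy => hσ.trans_le hy.1
  · exact preimage_mono fun y hy => hσ0.trans_le hy.1
  · exact principal_mono.mpr (preimage_mono Icc_subset_Ici_self)

end ExplicitFormula

section ConditionalBound

lemma norm_add_conj_le {z : ℂ} {l : ℝ} (hl : 0 ≤ l) (h : -l ≤ z.re) :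
    ‖z + starRingEnd ℂ z‖ ≤ 2 * (z.re + 2 * l) := by
  rw [Complex.add_conj, Complex.norm_real, Real.norm_eq_abs, abs_le]
  constructor <;> linarith

lemma norm_integral_logDeriv_riemannZeta₁_mul_perronKernel_le
    (hζ : ∀ s : ℂ, 1 / 2 < s.re → riemannZeta₁ s ≠ 0) {x σ : ℝ} (hx : 1 ≤ x) (hσ : 1 / 2 < σ) :
    ‖∫ t : ℝ, logDeriv riemannZeta₁ (σ + t * Complex.I) * perronKernel x (σ + t * Complex.I)‖ ≤
      2 * π * (x ^ σ * (‖logDeriv riemannZeta₁ (2 * σ)‖ + Real.log (σ + 1)) / σ +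
        ‖logDeriv riemannZeta₁ (2 * σ)‖ + ‖logDeriv riemannZeta₁ (2 * σ + 1)‖ / x) := by
  have hσ0 : 0 < σ := by linarith
  have : 0 < x := by linarith
  set D := logDeriv riemannZeta₁
  have hD : DifferentiableOn ℂ D (Complex.re ⁻¹' Ici σ) :=
    (differentiableOn_logDeriv_riemannZeta₁ hζ).mono (preimage_mono (Ici_subset_Ioi.mpr hσ))
  have hDO := logDeriv_riemannZeta₁_isBigO hζ hσ
  set L : ℂ → ℂ := fun s => Complex.log (s / 2 + 1)
  have hL : DifferentiableOn ℂ L (Complex.re ⁻¹' Ici σ) :=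
    differentiableOn_log_half_add_one.mono (preimage_mono (Ici_subset_Ioi.mpr hσ0))
  have hle := norm_integral_mul_perronKernel_le_of_norm_add_conj_le (N := fun s => 2 * (D s + L s))
    hx hσ0 (by norm_num) (by norm_num) hD hDO ((hD.add hL).const_mul 2)
    ((hDO.add (log_half_add_one_isBigO hσ0 (by norm_num))).const_mul_left 2) fun s hs => ?_
  · have hN : (2 * (D (2 * σ) + L (2 * σ))).re ≤ 2 * (‖D (2 * σ)‖ + Real.log (σ + 1)) := by
      have hlog : L (2 * σ) = Real.log (σ + 1) := by
        rw [Complex.ofReal_log (by positivity)]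
        push_cast
        simp [L]
      rw [hlog, ← Complex.ofReal_ofNat, Complex.re_ofReal_mul, Complex.add_re, Complex.ofReal_re]
      gcongr
      exact Complex.re_le_norm _
    calc _ ≤ x ^ σ * (π / σ * (2 * (‖D (2 * σ)‖ + Real.log (σ + 1)))) +
          2 * π * (‖D (2 * σ)‖ + ‖D (2 * σ + 1)‖ / x) := hle.trans (by gcongr)
      _ = _ := by ring
  · have hlog : 0 ≤ Real.log ‖s / 2 + 1‖ :=
      Real.log_nonneg (one_le_norm_half_add_one (hσ0.le.trans_eq hs.symm))
    refine (norm_add_conj_le (by positivity)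
      (neg_half_log_le_re_logDeriv_riemannZeta₁ hζ (hσ.trans_eq hs.symm))).trans_eq ?_
    have hre : (2 * (D s + L s)).re = 2 * ((D s).re + Real.log ‖s / 2 + 1‖) := by
      simp [L, Complex.log_re]
    rw [hre, ← mul_assoc 2 (1 / 2 : ℝ), mul_one_div_cancel two_ne_zero, one_mul]

lemma abs_psi₁Error_le (hζ : ∀ s : ℂ, 1 / 2 < s.re → riemannZeta₁ s ≠ 0) {x σ : ℝ}
    (hx : 1 ≤ x) (hσ : 1 / 2 < σ) :
    |psi₁Error x| ≤ x * (x ^ σ * (‖logDeriv riemannZeta₁ (2 * σ)‖ + Real.log (σ + 1)) / σ +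
      ‖logDeriv riemannZeta₁ (2 * σ)‖ + ‖logDeriv riemannZeta₁ (2 * σ + 1)‖ / x) := by
  have hx0 : 0 < x := by linarith
  have h := congrArg norm (psi₁Error_eq_integral hζ hx0 hσ)
  rw [Complex.norm_real, Real.norm_eq_abs, norm_mul, norm_neg,
    show (x / (2 * π) : ℂ) = (x / (2 * π) : ℝ) by push_cast; rfl, Complex.norm_real,
    Real.norm_of_nonneg (by positivity)] at h
  rw [h]
  refine (mul_le_mul_of_nonneg_left
    (norm_integral_logDeriv_riemannZeta₁_mul_perronKernel_le hζ hx hσ) (by positivity)).trans_eq ?_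
  rw [← mul_assoc, div_mul_cancel₀ _ Real.two_pi_pos.ne']

lemma norm_logDeriv_riemannZeta₁_one_le : ‖logDeriv riemannZeta₁ 1‖ ≤ 2 / 3 := by
  rw [logDeriv_apply, riemannZeta₁_one, deriv_riemannZeta₁_one, div_one, Complex.norm_real,
    Real.norm_of_nonneg (by linarith [Real.one_half_lt_eulerMascheroniConstant])]
  exact Real.eulerMascheroniConstant_lt_two_thirds.le

lemma logDeriv_riemannZeta₁_ofReal {x : ℝ} (hx : 1 < x) :
    logDeriv riemannZeta₁ x = (1 / (x - 1) - ∑' n : ℕ, vonMangoldt n / (n : ℝ) ^ x : ℝ) := by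
  have hre : 1 < (x : ℂ).re := hx
  have hLSeries : LSeries (fun n => (vonMangoldt n : ℂ)) x =
      (∑' n : ℕ, vonMangoldt n / (n : ℝ) ^ x : ℝ) := by
    rw [LSeries, Complex.ofReal_tsum]
    congr 1 with n
    rw [LSeries.term_of_ne_zero' (mod_cast (zero_lt_one.trans hx).ne'), Complex.ofReal_div,
      Complex.ofReal_cpow n.cast_nonneg, Complex.ofReal_natCast]
  have h := ArithmeticFunction.LSeries_vonMangoldt_eq_deriv_riemannZeta_div hre
  rw [hLSeries, neg_deriv_riemannZeta_div (by rintro h; simp [h] at hre)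
    (riemannZeta_ne_zero_of_one_lt_re hre)] at h
  push_cast at h ⊢
  rw [h]
  ring

lemma norm_logDeriv_riemannZeta₁_two_le (hζ : ∀ s : ℂ, 1 / 2 < s.re → riemannZeta₁ s ≠ 0) :
    ‖logDeriv riemannZeta₁ 2‖ ≤ 1 := by
  have hlower := neg_half_log_le_re_logDeriv_riemannZeta₁ hζ (s := 2) (by norm_num)
  have htwo := logDeriv_riemannZeta₁_ofReal one_lt_two
  rw [Complex.ofReal_ofNat] at htwo
  have hsum : 0 ≤ ∑' n : ℕ, vonMangoldt n / (n : ℝ) ^ (2 : ℝ) :=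
    tsum_nonneg fun n => div_nonneg ArithmeticFunction.vonMangoldt_nonneg (by positivity)
  rw [htwo, Complex.ofReal_re, show ‖(2 : ℂ) / 2 + 1‖ = 2 by norm_num] at hlower
  rw [htwo, Complex.norm_real, Real.norm_eq_abs, abs_le]
  constructor <;> linarith [Real.log_two_lt_d9]

lemma abs_psi₁Error_le_rpow (hζ : ∀ s : ℂ, 1 / 2 < s.re → riemannZeta₁ s ≠ 0) {x : ℝ}
    (hx : 1 ≤ x) : |psi₁Error x| ≤ x * (7 / 3 * x ^ (1 / 2 : ℝ) + 2 / 3 + 1 / x) := by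
  have hx0 : 0 < x := by linarith
  have hcont {s : ℂ} (hs : 1 / 2 < s.re) : ContinuousAt (logDeriv riemannZeta₁) s :=
    (differentiableOn_logDeriv_riemannZeta₁ hζ).continuousOn.continuousAt
      ((isOpen_Ioi.preimage Complex.continuous_re).mem_nhds hs)
  have hlim : Tendsto (fun σ : ℝ => x * (x ^ σ * (‖logDeriv riemannZeta₁ (2 * σ)‖ +
      Real.log (σ + 1)) / σ + ‖logDeriv riemannZeta₁ (2 * σ)‖ +
      ‖logDeriv riemannZeta₁ (2 * σ + 1)‖ / x)) (𝓝[>] (1 / 2)) (𝓝 (x * (x ^ (1 / 2 : ℝ) *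
      (‖logDeriv riemannZeta₁ 1‖ + Real.log (1 / 2 + 1)) / (1 / 2) + ‖logDeriv riemannZeta₁ 1‖ +
      ‖logDeriv riemannZeta₁ 2‖ / x))) := by
    have hone : Tendsto (fun σ : ℝ => ‖logDeriv riemannZeta₁ (2 * σ)‖) (𝓝 (1 / 2))
        (𝓝 ‖logDeriv riemannZeta₁ 1‖) := by
      refine ((hcont (by norm_num)).tendsto.comp ?_).norm
      exact Continuous.tendsto' (by fun_prop) _ _ (by norm_num)
    have htwo : Tendsto (fun σ : ℝ => ‖logDeriv riemannZeta₁ (2 * σ + 1)‖) (𝓝 (1 / 2))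
        (𝓝 ‖logDeriv riemannZeta₁ 2‖) := by
      refine ((hcont (by norm_num)).tendsto.comp ?_).norm
      exact Continuous.tendsto' (by fun_prop) _ _ (by norm_num)
    have hpow := (Real.continuous_const_rpow hx0.ne').tendsto (1 / 2)
    have hlog : Tendsto (fun σ : ℝ => Real.log (σ + 1)) (𝓝 (1 / 2)) (𝓝 (Real.log (1 / 2 + 1))) :=
      ContinuousAt.log (by fun_prop) (by norm_num)
    exact (((((hpow.mul (hone.add hlog)).div tendsto_id (by norm_num)).add hone).add
      (htwo.div_const x)).const_mul x).mono_left nhdsWithin_le_nhds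
  refine (ge_of_tendsto hlim (eventually_mem_nhdsWithin.mono fun σ hσ =>
    abs_psi₁Error_le hζ hx hσ)).trans ?_
  have hone := norm_logDeriv_riemannZeta₁_one_le
  have htwo := norm_logDeriv_riemannZeta₁_two_le hζ
  have hlog := Real.log_le_sub_one_of_pos (x := 1 / 2 + 1) (by norm_num)
  calc _ ≤ x * (x ^ (1 / 2 : ℝ) * (2 / 3 + (1 / 2 + 1 - 1)) / (1 / 2) + 2 / 3 + 1 / x) := by gcongr
    _ = _ := by ring

end ConditionalBound

section Criterion

lemma sq_lt_mul_cube_iff {a C y : ℝ} (hC : 0 ≤ C) (hy : 0 ≤ y) :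
    a ^ 2 < C ^ 2 * y ^ 3 ↔ |a| < C * y ^ (3 / 2 : ℝ) := by
  have hpow : (y ^ (3 / 2 : ℝ)) ^ 2 = y ^ 3 := by
    rw [← Real.rpow_mul_natCast hy, ← Real.rpow_natCast]
    norm_num
  rw [← hpow, ← mul_pow, sq_lt_sq, abs_of_nonneg (by positivity : 0 ≤ C * y ^ (3 / 2 : ℝ))]

lemma abs_sum_inv_delta_sub_lt (hζ : ∀ s : ℂ, 1 / 2 < s.re → riemannZeta₁ s ≠ 0) {n : ℕ}
    (hn : 0 < n) :
    |(∑ k ∈ Finset.Icc 1 (delta n), (1 : ℝ) / k) - (n : ℝ) ^ 2 / 2| <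
      6 * (n : ℝ) ^ (3 / 2 : ℝ) := by
  have hn1 : (1 : ℝ) ≤ n := mod_cast hn
  have herr := abs_psi₁Error_le_rpow hζ hn1
  have hsum := abs_sum_inv_delta_sub_psi₁_le_one n
  have hpow : (n : ℝ) ^ (3 / 2 : ℝ) = n * (n : ℝ) ^ (1 / 2 : ℝ) := by
    rw [← Real.rpow_one_add' (by positivity) (by norm_num)]
    norm_num
  have hhalf : 1 ≤ (n : ℝ) ^ (1 / 2 : ℝ) := Real.one_le_rpow hn1 (by norm_num)
  have hle : (n : ℝ) ≤ n * (n : ℝ) ^ (1 / 2 : ℝ) := le_mul_of_one_le_right (by positivity) hhalf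
  rw [psi₁Error, max_eq_left (by linarith), mul_add, mul_one_div_cancel (by positivity)] at herr
  rw [hpow, abs_lt]
  rw [abs_le] at herr hsum
  constructor <;> nlinarith

lemma abs_psi₁_sub_le {n : ℕ} (hn : 0 < n)
    (h : |(∑ k ∈ Finset.Icc 1 (delta n), (1 : ℝ) / k) - (n : ℝ) ^ 2 / 2| <
      6 * (n : ℝ) ^ (3 / 2 : ℝ)) :
    |psi₁ n - (n : ℝ) ^ 2 / 2| ≤ 7 * (n : ℝ) ^ (3 / 2 : ℝ) := by
  have hpow : 1 ≤ (n : ℝ) ^ (3 / 2 : ℝ) := Real.one_le_rpow (mod_cast hn) (by norm_num)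
  have hsum := abs_sum_inv_delta_sub_psi₁_le_one n
  rw [abs_le] at hsum ⊢
  rw [abs_lt] at h
  constructor <;> linarith

end Criterion

end HarmonicCriterion

theorem rh_iff_harmonic_bound :
    RH ↔ ∀ n : ℕ, 0 < n →
      ((∑ k ∈ Finset.Icc 1 (delta n), (1 : ℝ) / k) - (n : ℝ) ^ 2 / 2) ^ 2
        < 36 * (n : ℝ) ^ 3 := by
  have hsq (n : ℕ) : ((∑ k ∈ Finset.Icc 1 (delta n), (1 : ℝ) / k) - (n : ℝ) ^ 2 / 2) ^ 2
      < 36 * (n : ℝ) ^ 3 ↔ |(∑ k ∈ Finset.Icc 1 (delta n), (1 : ℝ) / k) - (n : ℝ) ^ 2 / 2| <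
        6 * (n : ℝ) ^ (3 / 2 : ℝ) := by
    convert HarmonicCriterion.sq_lt_mul_cube_iff (C := 6) (by norm_num) n.cast_nonneg using 2
    norm_num
  simp only [HarmonicCriterion.RH_iff_riemannZeta₁_ne_zero, hsq]
  refine ⟨fun hζ n hn => HarmonicCriterion.abs_sum_inv_delta_sub_lt hζ hn, fun h s hs => ?_⟩
  exact HarmonicCriterion.riemannZeta₁_ne_zero_of_isBigO (c := 3 / 2) (by norm_num)
    (HarmonicCriterion.psi₁Error_isBigO_of_natCast (by norm_num) fun n hn =>
      HarmonicCriterion.abs_psi₁_sub_le hn (h n hn)) (by linarith)
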